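/- arXiv:1510.05455 — 3 statements merged into one kernel-verified Lean document; each statement's English description precedes it below -/
import Mathlib

section
/- Let v be a radial weight such that ∫₀¹ (1-s)²/v̂(s) ds < ∞. Then there exists a constant C = C(v) > 0 such that for every function f analytic on the unit disc 𝔻, ∫₀¹ |f(t)| dt ≤ C · ‖f‖_{D_v}. -/
open MeasureTheory Real Set Filter

noncomputable section

/-- `hatw v r = ∫_r^1 v(s) ds`. -/
def hatw (v : ℝ → ℝ) (r : ℝ) : ℝ := ∫ s in r..1, v s

/-- A radial weight: measurable, positive on `[0,1)`, integrable on `(0,1)`. -/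
def RadialWeight (v : ℝ → ℝ) : Prop :=
  Measurable v ∧ (∀ r ∈ Set.Ico (0:ℝ) 1, 0 < v r) ∧
    MeasureTheory.IntegrableOn v (Set.Ioo 0 1)

/-- Membership in the class `D̂`. -/
def DoublingD (v : ℝ → ℝ) : Prop :=
  ∃ C : ℝ, 1 ≤ C ∧ ∀ r ∈ Set.Ico (0:ℝ) 1, hatw v r ≤ C * hatw v ((1+r)/2)

/-- Squared Dirichlet-type norm `‖f‖_{D_v}^2`. -/
def DvSq (v : ℝ → ℝ) (f : ℂ → ℂ) : ENNReal :=
  (‖f 0‖₊ : ENNReal)^2 +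
    (ENNReal.ofReal Real.pi)⁻¹ *
      ∫⁻ z in Metric.ball (0:ℂ) 1, (‖deriv f z‖₊ : ENNReal)^2 * ENNReal.ofReal (v ‖z‖)

/-- The Muckenhoupt type quantity `M₁(v)`. -/
def M1v (v : ℝ → ℝ) : ENNReal :=
  ⨆ r ∈ Set.Ioo (0:ℝ) 1,
    (∫⁻ s in Set.Ioo r 1, ENNReal.ofReal (hatw v s / (1-s)^2)) ^ (1/2 : ℝ) *
    (∫⁻ s in Set.Ioo (0:ℝ) r, ENNReal.ofReal (1 / hatw v s)) ^ (1/2 : ℝ)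

/-- The Muckenhoupt type quantity `M₂(v)`. -/
def M2v (v : ℝ → ℝ) : ENNReal :=
  ⨆ r ∈ Set.Ioo (0:ℝ) 1,
    (∫⁻ s in Set.Ioo (0:ℝ) r, ENNReal.ofReal (hatw v s / (1-s)^4)) ^ (1/2 : ℝ) *
    (∫⁻ s in Set.Ioo r 1, ENNReal.ofReal ((1-s)^2 / hatw v s)) ^ (1/2 : ℝ)

/-- The moment `v_x = ∫_0^1 s^x v(s) ds`. -/
def vx (v : ℝ → ℝ) (x : ℕ) : ℝ := ∫ s in (0:ℝ)..1, s^x * v s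

/-- `M_∞(s,f)`, the maximum of `|f|` on the circle of radius `s`. -/
def Minf (f : ℂ → ℂ) (s : ℝ) : ℝ := sSup ((fun z => ‖f z‖) '' Metric.sphere (0:ℂ) s)

/-- `M₂(r,h)`. -/
def M2mean (h : ℂ → ℂ) (r : ℝ) : ℝ :=
  Real.sqrt ((2*Real.pi)⁻¹ * ∫ θ in (-Real.pi)..Real.pi, ‖h ((r:ℂ) * Complex.exp (θ * Complex.I))‖^2)

/-- The norm of `B(2,∞)` (with values in `[0,∞]`). -/
def B2infE (g : ℂ → ℂ) : ENNReal :=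
  (‖g 0‖₊ : ENNReal) +
    ⨆ r ∈ Set.Ioo (0:ℝ) 1, ENNReal.ofReal (M2mean (deriv g) r * Real.sqrt (1-r))

/-- The `p`-th power of the norm of `B(2,p)` (with values in `[0,∞]`). -/
def B2pE (p : ℝ) (g : ℂ → ℂ) : ENNReal :=
  ENNReal.ofReal (‖g 0‖ ^ p) +
    ∫⁻ r in Set.Ioo (0:ℝ) 1, ENNReal.ofReal (M2mean (deriv g) r ^ p * (1-r)^(p/2-1))

/-- The generalized Hilbert operator `H_g`. -/
def Hg (g f : ℂ → ℂ) (z : ℂ) : ℂ := ∫ t in Set.Ioo (0:ℝ) 1, f t * deriv g (t * z)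

/-- The Hilbert operator `H` acting on functions on `[0,1)`. -/
def Hop (φ : ℝ → ℂ) (z : ℂ) : ℂ := ∫ t in Set.Ioo (0:ℝ) 1, φ t / (1 - t * z)

/-- The sublinear Hilbert operator `H̃`. -/
def Htil (φ : ℝ → ℂ) (z : ℂ) : ℂ := ∫ t in Set.Ioo (0:ℝ) 1, (‖φ t‖ : ℂ) / (1 - t * z)

/-- Squared norm in `L²_{V̂₂}`. -/
def L2V2sq (v : ℝ → ℝ) (φ : ℝ → ℂ) : ENNReal :=
  ∫⁻ t in Set.Ioo (0:ℝ) 1, (‖φ t‖₊ : ENNReal)^2 * ENNReal.ofReal (hatw v t / (1-t)^2)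

/-- Taylor coefficient `ĝ(k)` of `g` at the origin. -/
def gcoef (g : ℂ → ℂ) (k : ℕ) : ℂ := iteratedDeriv k g 0 / (Nat.factorial k)


lemma circ_mem {r : ℝ} (hr0 : 0 < r) (hr1 : r < 1) (θ : ℝ) :
    circleMap 0 r θ ∈ Metric.ball (0:ℂ) 1 := by
  simp [abs_of_pos hr0, hr1]

lemma real_mem {x : ℝ} (h0 : -1 < x) (hx1 : x < 1) : (x:ℂ) ∈ Metric.ball (0:ℂ) 1 := by
  simp [abs_lt, h0, hx1]

lemma fejer_real (h : ℂ → ℂ) (hh : DifferentiableOn ℂ h (Metric.ball 0 1)) {r : ℝ}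
    (hr0 : 0 < r) (hr1 : r < 1) :
    ∫ x in (-r)..r, ‖h x‖^2 ≤ r * ∫ θ in (-π)..π, ‖h (circleMap 0 r θ)‖^2 := by
  set g : ℂ → ℂ := fun z => h z * (starRingEnd ℂ) (h ((starRingEnd ℂ) z)) with hg
  have hgd : DifferentiableOn ℂ g (Metric.ball 0 1) := by
    intro z hz
    have hz' : (starRingEnd ℂ) z ∈ Metric.ball (0:ℂ) 1 := by simpa using hz
    have h1 := (hh z hz).differentiableAt (Metric.isOpen_ball.mem_nhds hz)
    have h2 := (hh _ hz').differentiableAt (Metric.isOpen_ball.mem_nhds hz')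
    have h3 := h2.hasDerivAt.conj_conj
    rw [Complex.conj_conj] at h3
    exact (h1.mul h3.differentiableAt).differentiableWithinAt
  obtain ⟨G, hG⟩ := hgd.isExactOn_ball
  have hgc := hgd.continuousOn
  have hcirc : Continuous (fun θ => h (circleMap 0 r θ)) :=
    hh.continuousOn.comp_continuous (continuous_circleMap 0 r) (circ_mem hr0 hr1)
  have hgcirc : Continuous (fun θ => g (circleMap 0 r θ)) :=
    hgc.comp_continuous (continuous_circleMap 0 r) (circ_mem hr0 hr1)
  have e1 : ∫ x in (-r)..r, g x = G r - G ((-r : ℝ) : ℂ) := by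
    refine intervalIntegral.integral_eq_sub_of_hasDerivAt (f := fun x : ℝ => G x) ?_ ?_
    · intro x hx
      rw [uIcc_of_le (by linarith)] at hx
      exact (hG _ (real_mem (by linarith [hx.1]) (by linarith [hx.2]))).comp_ofReal
    · apply ContinuousOn.intervalIntegrable
      refine hgc.comp Complex.continuous_ofReal.continuousOn ?_
      intro x hx
      rw [uIcc_of_le (by linarith)] at hx
      exact real_mem (by linarith [hx.1]) (by linarith [hx.2])
  have e2 : ∫ θ in (0:ℝ)..π, g (circleMap 0 r θ) * (circleMap 0 r θ * Complex.I) =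
      G ((-r : ℝ) : ℂ) - G r := by
    rw [intervalIntegral.integral_eq_sub_of_hasDerivAt (f := fun θ : ℝ => G (circleMap 0 r θ))]
    · simp [circleMap]
    · intro θ _
      exact (hG _ (circ_mem hr0 hr1 θ)).comp θ (hasDerivAt_circleMap 0 r θ)
    · exact (hgcirc.mul ((continuous_circleMap 0 r).mul continuous_const)).intervalIntegrable _ _
  have e3 : ∫ x in (-r)..r, g x = ((∫ x in (-r)..r, ‖h x‖^2 : ℝ) : ℂ) := by
    rw [← intervalIntegral.integral_ofReal]
    congr 1
    ext x
    simp [hg, Complex.mul_conj, Complex.normSq_eq_norm_sq]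
  set A : ℝ → ℝ := fun θ => ‖h (circleMap 0 r θ)‖^2 with hA
  have hAc : Continuous A := hcirc.norm.pow 2
  have hAc' : Continuous (fun θ => A (-θ)) := hAc.comp continuous_neg
  have hconj : ∀ θ, (starRingEnd ℂ) (circleMap 0 r θ) = circleMap 0 r (-θ) := by
    intro θ
    simp [circleMap, ← Complex.exp_conj]
  calc ∫ x in (-r)..r, ‖h x‖^2 ≤ ‖((∫ x in (-r)..r, ‖h x‖^2 : ℝ) : ℂ)‖ := by
        rw [Complex.norm_real]; exact le_norm_self _
    _ = ‖∫ θ in (0:ℝ)..π, g (circleMap 0 r θ) * (circleMap 0 r θ * Complex.I)‖ := by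
        rw [← e3, e1, e2, ← norm_neg, neg_sub]
    _ ≤ ∫ θ in (0:ℝ)..π, r * (A θ + A (-θ)) := by
        apply intervalIntegral.norm_integral_le_of_norm_le pi_pos.le
        · refine Eventually.of_forall fun θ _ => ?_
          simp only [hg, hA, norm_mul, RCLike.norm_conj, hconj, Complex.norm_I, norm_circleMap_zero,
            abs_of_pos hr0]
          nlinarith [sq_nonneg (‖h (circleMap 0 r θ)‖ - ‖h (circleMap 0 r (-θ))‖),
            sq_nonneg (‖h (circleMap 0 r θ)‖ + ‖h (circleMap 0 r (-θ))‖)]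
        · exact (continuous_const.mul (hAc.add hAc')).intervalIntegrable _ _
    _ = r * ∫ θ in (-π)..π, A θ := by
        rw [intervalIntegral.integral_const_mul, intervalIntegral.integral_add
          (hAc.intervalIntegrable _ _) (hAc'.intervalIntegrable _ _),
          intervalIntegral.integral_comp_neg, neg_zero, add_comm,
          intervalIntegral.integral_add_adjacent_intervals
          (hAc.intervalIntegrable _ _) (hAc.intervalIntegrable _ _)]

lemma fejer_lint (h : ℂ → ℂ) (hh : DifferentiableOn ℂ h (Metric.ball 0 1)) {r : ℝ}
    (hr0 : 0 < r) (hr1 : r < 1) :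
    ∫⁻ x in Ioo 0 r, (‖h (x:ℂ)‖₊ : ENNReal)^2 ≤
      ENNReal.ofReal r * ∫⁻ θ in Ioo (-π) π, (‖h (circleMap 0 r θ)‖₊ : ENNReal)^2 := by
  have hcirc : Continuous (fun θ => h (circleMap 0 r θ)) :=
    hh.continuousOn.comp_continuous (continuous_circleMap 0 r) (circ_mem hr0 hr1)
  have hre : ContinuousOn (fun x : ℝ => h x) (Icc (-r) r) := by
    refine hh.continuousOn.comp Complex.continuous_ofReal.continuousOn ?_
    intro x hx
    exact real_mem (by linarith [hx.1]) (by linarith [hx.2])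
  have key : ∀ z : ℂ, (‖z‖₊ : ENNReal)^2 = ENNReal.ofReal (‖z‖^2) := by
    intro z
    rw [ENNReal.ofReal_pow (norm_nonneg _), ofReal_norm]; rfl
  have H := ENNReal.ofReal_le_ofReal (fejer_real h hh hr0 hr1)
  rw [ENNReal.ofReal_mul hr0.le, intervalIntegral.integral_of_le (by linarith),
    intervalIntegral.integral_of_le (by linarith [pi_pos]), 
    ofReal_integral_eq_lintegral_ofReal, ofReal_integral_eq_lintegral_ofReal] at H
  · simp only [key]
    rw [Measure.restrict_congr_set (Ioo_ae_eq_Ioc (a := -π) (b := π))]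
    refine le_trans (lintegral_mono_set ?_) H
    intro x hx
    exact ⟨by linarith [hx.1], hx.2.le⟩
  · exact ((hcirc.norm.pow 2).continuousOn.integrableOn_Icc).mono_set Ioc_subset_Icc_self
  · exact Eventually.of_forall fun _ => by positivity
  · exact ((hre.norm.pow 2).integrableOn_Icc).mono_set Ioc_subset_Icc_self
  · exact Eventually.of_forall fun _ => by positivity

lemma tonelli (F w : ℝ → ENNReal) (hF : Measurable F) (hw : Measurable w) :
    ∫⁻ s in Ioo 0 1, F s * ∫⁻ r in Ioo s 1, w r =
      ∫⁻ r in Ioo 0 1, w r * ∫⁻ s in Ioo 0 r, F s := by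
  have hm : Measurable (fun p : ℝ × ℝ => ({q : ℝ × ℝ | q.1 < q.2}).indicator
      (fun p => F p.1 * w p.2) p) :=
    ((hF.comp measurable_fst).mul (hw.comp measurable_snd)).indicator
      (measurableSet_lt measurable_fst measurable_snd)
  have := lintegral_lintegral_swap (μ := volume.restrict (Ioo (0:ℝ) 1))
    (ν := volume.restrict (Ioo (0:ℝ) 1))
    (f := fun s r => ({q : ℝ × ℝ | q.1 < q.2}).indicator (fun p => F p.1 * w p.2) (s, r))
    hm.aemeasurable
  refine Eq.trans ?_ (this.trans ?_)
  · refine setLIntegral_congr_fun measurableSet_Ioo fun s hs => ?_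
    rw [← lintegral_const_mul _ hw, ← lintegral_indicator measurableSet_Ioo,
      ← lintegral_indicator measurableSet_Ioo]
    congr 1; ext r
    have := hs.1
    by_cases h1 : s < r <;> by_cases h2 : r < 1 <;> simp [indicator, h1, h2]
    intro h; linarith
  · refine setLIntegral_congr_fun measurableSet_Ioo fun r hr => ?_
    rw [← lintegral_const_mul _ hF, ← lintegral_indicator measurableSet_Ioo,
      ← lintegral_indicator measurableSet_Ioo]
    congr 1; ext s
    have := hr.2
    by_cases h1 : s < r <;> by_cases h2 : 0 < s <;> simp [indicator, h1, h2, mul_comm]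
    intro h; linarith

lemma polar_ball (h : ℂ → ℂ) (hh : Measurable h) (v : ℝ → ℝ) (hv : Measurable v) :
    ∫⁻ z in Metric.ball (0:ℂ) 1, (‖h z‖₊ : ENNReal)^2 * ENNReal.ofReal (v ‖z‖) =
    ∫⁻ r in Ioo 0 1, ENNReal.ofReal (v r) *
      (ENNReal.ofReal r * ∫⁻ θ in Ioo (-π) π, (‖h (circleMap 0 r θ)‖₊ : ENNReal)^2) := by
  rw [← lintegral_indicator Metric.isOpen_ball.measurableSet,
    ← Complex.lintegral_comp_polarCoord_symm, polarCoord_target, Measure.volume_eq_prod,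
    ← Measure.prod_restrict, lintegral_prod]
  · rw [← lintegral_indicator measurableSet_Ioi, ← lintegral_indicator measurableSet_Ioo]
    congr 1; ext r
    by_cases h0 : 0 < r
    swap
    · simp [indicator, h0]
    by_cases h1 : r < 1
    · rw [indicator_of_mem (by exact h0), indicator_of_mem (by exact ⟨h0, h1⟩), ← mul_assoc,
        ← lintegral_const_mul _ (by fun_prop)]
      congr 1; ext θ
      have e : Complex.polarCoord.symm (r, θ) = circleMap 0 r θ := by
        simp [Complex.polarCoord_symm_apply, circleMap, Complex.exp_mul_I]
      rw [e, indicator_of_mem (circ_mem h0 h1 θ)]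
      simp only [norm_circleMap_zero, abs_of_pos h0, smul_eq_mul]
      ring
    · rw [indicator_of_mem (by exact h0), indicator_of_notMem (by simp [h1])]
      rw [← lintegral_zero (μ := volume.restrict (Ioo (-π) π))]
      congr 1; ext θ
      rw [indicator_of_notMem, smul_zero]
      simp [abs_of_pos h0, not_lt.mp h1]
  · have hp : Measurable (fun p : ℝ × ℝ => Complex.polarCoord.symm p) := by
      simp only [Complex.polarCoord_symm_apply]
      fun_prop
    have hi : Measurable ((Metric.ball (0:ℂ) 1).indicator
        (fun z => (‖h z‖₊ : ENNReal)^2 * ENNReal.ofReal (v ‖z‖))) := by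
      refine Measurable.indicator ?_ Metric.isOpen_ball.measurableSet
      fun_prop
    have h2 := hi.comp hp
    refine Measurable.aemeasurable ?_
    simp only [smul_eq_mul]
    exact (measurable_fst.ennreal_ofReal).mul h2

lemma ftc_bound (f : ℂ → ℂ) (hf : DifferentiableOn ℂ f (Metric.ball 0 1)) {t : ℝ}
    (ht : t ∈ Ioo (0:ℝ) 1) :
    (‖f (t:ℂ)‖₊ : ENNReal) ≤ ‖f 0‖₊ + ∫⁻ s in Ioo 0 t, (‖deriv f (s:ℂ)‖₊ : ENNReal) := by
  have hd : DifferentiableOn ℂ (deriv f) (Metric.ball 0 1) := hf.deriv Metric.isOpen_ball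
  have e : ∫ s in (0:ℝ)..t, deriv f s = f t - f 0 := by
    rw [intervalIntegral.integral_eq_sub_of_hasDerivAt (f := fun x : ℝ => f x)]
    · simp
    · intro x hx
      rw [uIcc_of_le ht.1.le] at hx
      have hx' := real_mem (x := x) (by linarith [hx.1]) (by linarith [hx.2, ht.2])
      exact ((hf _ hx').differentiableAt
        (Metric.isOpen_ball.mem_nhds hx')).hasDerivAt.comp_ofReal
    · apply ContinuousOn.intervalIntegrable
      refine hd.continuousOn.comp Complex.continuous_ofReal.continuousOn ?_
      intro x hx
      rw [uIcc_of_le ht.1.le] at hx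
      exact real_mem (by linarith [hx.1]) (by linarith [hx.2, ht.2])
  have e2 : f t = f 0 + ∫ s in (0:ℝ)..t, deriv f s := by rw [e]; ring
  have h1 : ‖f (t:ℂ)‖ₑ ≤ ‖f 0‖ₑ + ∫⁻ s in Ioo 0 t, ‖deriv f (s:ℂ)‖ₑ := by
    rw [e2, Measure.restrict_congr_set (Ioo_ae_eq_Ioc (a := 0) (b := t)),
      intervalIntegral.integral_of_le ht.1.le]
    exact (enorm_add_le _ _).trans (add_le_add le_rfl (enorm_integral_le_lintegral_enorm _))
  exact h1

lemma hatw_pos_eq (v : ℝ → ℝ) (hv : RadialWeight v) {s : ℝ} (hs : s ∈ Ioo (0:ℝ) 1) :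
    0 < hatw v s ∧ ENNReal.ofReal (hatw v s) = ∫⁻ r in Ioo s 1, ENNReal.ofReal (v r) := by
  obtain ⟨hm, hp, hi⟩ := hv
  have hi' : IntegrableOn v (Ioo s 1) := hi.mono_set (Ioo_subset_Ioo_left hs.1.le)
  have hii : IntervalIntegrable v volume s 1 := by
    rw [intervalIntegrable_iff_integrableOn_Ioo_of_le hs.2.le]; exact hi'
  constructor
  · unfold hatw
    exact intervalIntegral.intervalIntegral_pos_of_pos_on hii
      (fun x hx => hp x ⟨(hs.1.trans hx.1).le, hx.2⟩) hs.2
  · unfold hatw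
    rw [intervalIntegral.integral_of_le hs.2.le, integral_Ioc_eq_integral_Ioo,
      ofReal_integral_eq_lintegral_ofReal hi']
    filter_upwards [ae_restrict_mem measurableSet_Ioo] with x hx
    exact (hp x ⟨(hs.1.trans hx.1).le, hx.2⟩).le

lemma energy (v : ℝ → ℝ) (hv : RadialWeight v) (f : ℂ → ℂ)
    (hf : DifferentiableOn ℂ f (Metric.ball 0 1)) :
    ∫⁻ s in Ioo (0:ℝ) 1, (‖deriv f (s:ℂ)‖₊ : ENNReal)^2 * ENNReal.ofReal (hatw v s) ≤
    ∫⁻ z in Metric.ball (0:ℂ) 1, (‖deriv f z‖₊ : ENNReal)^2 * ENNReal.ofReal (v ‖z‖) := by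
  have hd : DifferentiableOn ℂ (deriv f) (Metric.ball 0 1) := hf.deriv Metric.isOpen_ball
  have hmd : Measurable (deriv f) := measurable_deriv f
  have hvm := hv.1
  rw [polar_ball _ hmd v hvm]
  calc _ = ∫⁻ s in Ioo (0:ℝ) 1, (‖deriv f (s:ℂ)‖₊ : ENNReal)^2 *
          ∫⁻ r in Ioo s 1, ENNReal.ofReal (v r) := by
        refine setLIntegral_congr_fun measurableSet_Ioo fun s hs => ?_
        rw [(hatw_pos_eq v hv hs).2]
    _ = _ := tonelli _ _ (by fun_prop) (by fun_prop)
    _ ≤ _ := by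
        refine setLIntegral_mono' measurableSet_Ioo fun r hr => ?_
        gcongr
        exact fejer_lint _ hd hr.1 hr.2

lemma main_bound (v : ℝ → ℝ) (hv : RadialWeight v) (f : ℂ → ℂ)
    (hf : DifferentiableOn ℂ f (Metric.ball 0 1)) :
    ∫⁻ t in Set.Ioo (0:ℝ) 1, (‖f (t:ℂ)‖₊ : ENNReal) ≤ ‖f 0‖₊ +
      (∫⁻ s in Set.Ioo (0:ℝ) 1, ENNReal.ofReal ((1-s)^2 / hatw v s)) ^ (1/2 : ℝ) *
      (∫⁻ z in Metric.ball (0:ℂ) 1, (‖deriv f z‖₊ : ENNReal)^2 * ENNReal.ofReal (v ‖z‖)) ^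
        (1/2 : ℝ) := by
  have hmd : Measurable (deriv f) := measurable_deriv f
  have hmF : Measurable (fun s : ℝ => (‖deriv f (s:ℂ)‖₊ : ENNReal)) := by fun_prop
  have hhat : AEMeasurable (hatw v) (volume.restrict (Ioo (0:ℝ) 1)) := by
    have : ContinuousOn (hatw v) (Icc 0 1) := by
      have hi : IntegrableOn v (Icc 0 1) := by
        rw [integrableOn_Icc_iff_integrableOn_Ioo]; exact hv.2.2
      have h1 := intervalIntegral.continuousOn_primitive_interval_left (f := v) (a := 0) (b := 1)
        (μ := volume) (by rw [uIcc_of_le zero_le_one]; exact hi)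
      rw [uIcc_of_le zero_le_one] at h1
      exact h1
    exact (this.mono Ioo_subset_Icc_self).aemeasurable measurableSet_Ioo
  calc _ ≤ ∫⁻ t in Set.Ioo (0:ℝ) 1, ((‖f 0‖₊ : ENNReal) +
          1 * ∫⁻ s in Ioo 0 t, (‖deriv f (s:ℂ)‖₊ : ENNReal)) := by
        refine setLIntegral_mono' measurableSet_Ioo fun t ht => ?_
        rw [one_mul]
        exact ftc_bound f hf ht
    _ = ‖f 0‖₊ + ∫⁻ s in Ioo (0:ℝ) 1, (‖deriv f (s:ℂ)‖₊ : ENNReal) * ∫⁻ _ in Ioo s 1, 1 := by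
        rw [lintegral_add_left measurable_const, tonelli _ _ hmF measurable_const]
        simp
    _ = ‖f 0‖₊ + ∫⁻ s in Ioo (0:ℝ) 1, ((fun s => ENNReal.ofReal ((1-s) / √(hatw v s))) *
          (fun s : ℝ => (‖deriv f (s:ℂ)‖₊ : ENNReal) * ENNReal.ofReal (√(hatw v s)))) s := by
        congr 1
        refine setLIntegral_congr_fun measurableSet_Ioo fun s hs => ?_
        have hp := Real.sqrt_pos.2 (hatw_pos_eq v hv hs).1
        simp only [Pi.mul_apply]
        rw [mul_left_comm, ← ENNReal.ofReal_mul (div_nonneg (by linarith [hs.2]) hp.le),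
          div_mul_cancel₀ _ hp.ne']
        simp
    _ ≤ _ := by
        gcongr
        refine (ENNReal.lintegral_mul_le_Lp_mul_Lq _ Real.HolderConjugate.two_two ?_ ?_).trans ?_
        · exact ((aemeasurable_const.sub aemeasurable_id).div hhat.sqrt).ennreal_ofReal
        · exact hmF.aemeasurable.mul hhat.sqrt.ennreal_ofReal
        · refine mul_le_mul' (ENNReal.rpow_le_rpow ?_ (by norm_num))
            (ENNReal.rpow_le_rpow ?_ (by norm_num))
          · refine setLIntegral_mono' measurableSet_Ioo fun s hs => ?_
            have hp := (hatw_pos_eq v hv hs).1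
            have hp' := Real.sqrt_pos.2 hp
            rw [ENNReal.rpow_two, ← ENNReal.ofReal_pow (div_nonneg (by linarith [hs.2]) hp'.le),
              div_pow, Real.sq_sqrt hp.le]
          · refine le_trans (le_of_eq ?_) (energy v hv f hf)
            refine setLIntegral_congr_fun measurableSet_Ioo fun s hs => ?_
            have hp := (hatw_pos_eq v hv hs).1
            rw [ENNReal.rpow_two, mul_pow, ← ENNReal.ofReal_pow (Real.sqrt_nonneg _),
              Real.sq_sqrt hp.le]

/-- Lemma 2.3 (well-definedness): if `∫_0^1 (1-s)^2/v̂(s) ds < ∞` then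
`∫_0^1 |f(t)| dt ≤ C ‖f‖_{D_v}` for every `f` analytic on the unit disc. -/
theorem statement0 (v : ℝ → ℝ) (hv : RadialWeight v)
    (hvg2 : ∫⁻ s in Set.Ioo (0:ℝ) 1, ENNReal.ofReal ((1-s)^2 / hatw v s) < ⊤) :
    ∃ C : ℝ, 0 < C ∧ ∀ f : ℂ → ℂ, DifferentiableOn ℂ f (Metric.ball 0 1) →
      ∫⁻ t in Set.Ioo (0:ℝ) 1, (‖f (t:ℂ)‖₊ : ENNReal) ≤
        ENNReal.ofReal C * (DvSq v f) ^ (1/2 : ℝ) := by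
  set I := ∫⁻ s in Set.Ioo (0:ℝ) 1, ENNReal.ofReal ((1-s)^2 / hatw v s) with hI
  set K := I ^ (1/2 : ℝ) * (ENNReal.ofReal π) ^ (1/2 : ℝ) with hK
  have hKt : K ≠ ⊤ := by
    refine ENNReal.mul_ne_top ?_ ?_
    · exact ENNReal.rpow_ne_top_of_nonneg (by norm_num) hvg2.ne
    · exact ENNReal.rpow_ne_top_of_nonneg (by norm_num) ENNReal.ofReal_ne_top
  refine ⟨1 + K.toReal, by positivity, fun f hf => (main_bound v hv f hf).trans ?_⟩
  rw [ENNReal.ofReal_add zero_le_one ENNReal.toReal_nonneg, ENNReal.ofReal_toReal hKt,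
    ENNReal.ofReal_one, add_mul, one_mul]
  refine add_le_add ?_ ?_
  · have h1 : (‖f 0‖₊ : ENNReal) ^ 2 ≤ DvSq v f := le_self_add
    calc (‖f 0‖₊ : ENNReal) = ((‖f 0‖₊ : ENNReal) ^ 2) ^ (1/2 : ℝ) := by
          rw [← ENNReal.rpow_natCast, ← ENNReal.rpow_mul]; norm_num
      _ ≤ _ := ENNReal.rpow_le_rpow h1 (by norm_num)
  · rw [hK, mul_assoc, ← ENNReal.mul_rpow_of_nonneg (ENNReal.ofReal π) (DvSq v f)
      (by norm_num : (0:ℝ) ≤ 1/2)]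
    refine mul_le_mul' le_rfl (ENNReal.rpow_le_rpow ?_ (by norm_num : (0:ℝ) ≤ 1/2))
    unfold DvSq
    rw [mul_add, ← mul_assoc, ENNReal.mul_inv_cancel (by simp [pi_pos]) ENNReal.ofReal_ne_top,
      one_mul]
    exact le_add_self

end
end

section
/- Let ω be a radial weight. Then there exists an absolute constant C > 0 such that for every function f analytic on the unit disc 𝔻, ∫₀¹ M_∞(r,f)² · ω̂(r) dr ≤ C · ∫_𝔻 |f(z)|² ω(|z|) dA(z). -/
open MeasureTheory Real Set Filter

noncomputable section

lemma schur_term (n m : ℕ) :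
    √((n:ℝ)+1) / (√((m:ℝ)+1) * (n+m+1)) ≤
      8 * √((m:ℝ)+1) / (√((m:ℝ)+1) + √((n:ℝ)+1)) - 8 * √(m:ℝ) / (√(m:ℝ) + √((n:ℝ)+1)) := by
  have ha : 0 ≤ √(m:ℝ) := Real.sqrt_nonneg _
  have hb : 0 < √((m:ℝ)+1) := Real.sqrt_pos.2 (by positivity)
  have hc : 0 < √((n:ℝ)+1) := Real.sqrt_pos.2 (by positivity)
  have ha2 : √(m:ℝ)^2 = m := Real.sq_sqrt (by positivity)
  have hb2 : √((m:ℝ)+1)^2 = m+1 := Real.sq_sqrt (by positivity)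
  have hc2 : √((n:ℝ)+1)^2 = n+1 := Real.sq_sqrt (by positivity)
  have hab : √(m:ℝ) ≤ √((m:ℝ)+1) := Real.sqrt_le_sqrt (by linarith)
  set a := √(m:ℝ)
  set b := √((m:ℝ)+1)
  set c := √((n:ℝ)+1)
  have e1 : (n:ℝ)+m+1 = b^2 + c^2 - 1 := by linarith
  have hb1 : 1 ≤ b^2 := by rw [hb2]; simp
  have hc1 : 1 ≤ c^2 := by rw [hc2]; simp
  have e2 : 8 * b / (b + c) - 8 * a / (a + c) = c * (8 * (b - a)) / ((a+c)*(b+c)) := by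
    field_simp; ring
  have e3 : b - a = 1 / (a+b) := by
    field_simp; nlinarith
  have h5 : 0 < b^2+c^2-1 := by linarith
  rw [e2, e3, e1, div_le_div_iff₀ (by positivity) (by positivity)]
  have h1 : (a+c)*(b+c) ≤ (b+c)^2 := by nlinarith
  have h2 : (b+c)^2 ≤ 4 * (b^2+c^2-1) := by nlinarith [sq_nonneg (b-c)]
  have h3 : 8 * (1/(a+b)) * b ≥ 4 := by
    rw [ge_iff_le, mul_one_div, div_mul_eq_mul_div, le_div_iff₀ (by positivity)]; linarith
  have h4 : 0 ≤ b^2+c^2-1 := by linarith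
  calc c * ((a+c)*(b+c)) ≤ c * (4 * (b^2+c^2-1)) :=
        mul_le_mul_of_nonneg_left (h1.trans h2) hc.le
    _ ≤ c * ((8 * (1/(a+b)) * b) * (b^2+c^2-1)) := by gcongr
    _ = _ := by ring

lemma schur_sum (n : ℕ) :
    ∑' m : ℕ, ENNReal.ofReal (√((n:ℝ)+1) / (√((m:ℝ)+1) * (n+m+1))) ≤ 8 := by
  rw [ENNReal.tsum_eq_iSup_nat]
  refine iSup_le fun N => ?_
  rw [← ENNReal.ofReal_sum_of_nonneg (fun i _ => by positivity)]
  have : ∑ m ∈ Finset.range N, (√((n:ℝ)+1) / (√((m:ℝ)+1) * (n+m+1))) ≤ 8 := by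
    have h := Finset.sum_le_sum (fun m (_ : m ∈ Finset.range N) => schur_term n m)
    have h2 := Finset.sum_range_sub (fun m : ℕ => 8 * √(m:ℝ) / (√(m:ℝ) + √((n:ℝ)+1))) N
    push_cast at h2
    rw [h2] at h
    refine h.trans ?_
    have hc : 0 < √((n:ℝ)+1) := Real.sqrt_pos.2 (by positivity)
    simp only [Real.sqrt_zero, mul_zero, zero_div, sub_zero]
    rw [div_le_iff₀ (by positivity)]
    linarith
  calc _ ≤ ENNReal.ofReal 8 := ENNReal.ofReal_le_ofReal this
    _ = 8 := by simp

lemma hilbert_ineq (c : ℕ → ℝ) :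
    ∑' n, ∑' m, ENNReal.ofReal (c n * c m / (n+m+1)) ≤
      16 * ∑' n, ENNReal.ofReal (c n ^ 2) := by
  set T : ℕ → ℕ → ENNReal := fun n m =>
    ENNReal.ofReal (c n ^ 2) * ENNReal.ofReal (√((n:ℝ)+1) / (√((m:ℝ)+1) * (n+m+1))) with hT
  have hS : ∑' n, ∑' m, T n m ≤ 8 * ∑' n, ENNReal.ofReal (c n ^ 2) := by
    rw [← ENNReal.tsum_mul_left]
    refine ENNReal.tsum_le_tsum fun n => ?_
    simp only [hT]
    rw [ENNReal.tsum_mul_left, mul_comm]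
    gcongr
    exact schur_sum n
  have hle : ∀ n m, ENNReal.ofReal (c n * c m / (n+m+1)) ≤ T n m + T m n := by
    intro n m
    simp only [hT]
    rw [← ENNReal.ofReal_mul (by positivity), ← ENNReal.ofReal_mul (by positivity),
      ← ENNReal.ofReal_add (by positivity) (by positivity)]
    refine ENNReal.ofReal_le_ofReal ?_
    have hb : 0 < √((m:ℝ)+1) := Real.sqrt_pos.2 (by positivity)
    have hc : 0 < √((n:ℝ)+1) := Real.sqrt_pos.2 (by positivity)
    set b := √((m:ℝ)+1)
    set d := √((n:ℝ)+1)
    have : c n ^ 2 * (d / (b * (n+m+1))) + c m ^ 2 * (b / (d * (m+n+1))) =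
      (c n ^ 2 * d^2 + c m ^ 2 * b^2) / (b * d) / (n+m+1) := by
      rw [add_comm (m:ℝ) n]; field_simp
    rw [this]
    gcongr
    rw [le_div_iff₀ (by positivity)]
    nlinarith [sq_nonneg (c n * d - c m * b), sq_nonneg (c n * d), sq_nonneg (c m * b)]
  calc _ ≤ ∑' n, ∑' m, (T n m + T m n) :=
        ENNReal.tsum_le_tsum fun n => ENNReal.tsum_le_tsum fun m => hle n m
    _ = ∑' n, ∑' m, T n m + ∑' n, ∑' m, T m n := by
        simp_rw [ENNReal.tsum_add]
    _ = ∑' n, ∑' m, T n m + ∑' n, ∑' m, T n m := by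
        congr 1; exact ENNReal.tsum_comm
    _ ≤ 8 * ∑' n, ENNReal.ofReal (c n ^ 2) + 8 * ∑' n, ENNReal.ofReal (c n ^ 2) := by gcongr
    _ = _ := by rw [← add_mul]; norm_num

lemma lintegral_pow_Ioo (s : ℝ) (hs : 0 < s) (k : ℕ) :
    ∫⁻ r in Ioo 0 s, ENNReal.ofReal (r ^ k) = ENNReal.ofReal (s^(k+1)/(k+1)) := by
  rw [← ofReal_integral_eq_lintegral_ofReal]
  · rw [← integral_Ioc_eq_integral_Ioo, ← intervalIntegral.integral_of_le hs.le, integral_pow]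
    simp
  · exact ((continuous_pow k).integrableOn_Icc).mono_set Ioo_subset_Icc_self
  · filter_upwards [ae_restrict_mem measurableSet_Ioo] with r hr
    exact pow_nonneg hr.1.le k

lemma lintegral_sq_series (b : ℕ → ℝ) (hb : ∀ n, 0 ≤ b n) (s : ℝ) (hs : 0 < s) :
    ∫⁻ r in Ioo 0 s, (∑' n, ENNReal.ofReal (b n * r ^ n)) ^ 2 ≤
      16 * ENNReal.ofReal s * ∑' n, ENNReal.ofReal ((b n * s ^ n) ^ 2) := by
  have h1 : ∫⁻ r in Ioo 0 s, (∑' n, ENNReal.ofReal (b n * r ^ n)) ^ 2 =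
      ∫⁻ r in Ioo 0 s, ∑' n, ∑' m, ENNReal.ofReal (b n * b m) * ENNReal.ofReal (r ^ (n + m)) := by
    refine setLIntegral_congr_fun measurableSet_Ioo fun r hr => ?_
    have hr0 := hr.1.le
    rw [sq, ← ENNReal.tsum_mul_left]
    conv_rhs => rw [ENNReal.tsum_comm]
    refine tsum_congr fun m => ?_
    rw [← ENNReal.tsum_mul_right]
    refine tsum_congr fun n => ?_
    have := hb n
    have := hb m
    rw [← ENNReal.ofReal_mul (by positivity), ← ENNReal.ofReal_mul (by positivity)]
    congr 1; ring
  have hm : ∀ n m : ℕ, AEMeasurable (fun r : ℝ =>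
      ENNReal.ofReal (b n * b m) * ENNReal.ofReal (r ^ (n + m))) (volume.restrict (Ioo 0 s)) :=
    fun n m => Measurable.aemeasurable (by fun_prop)
  have h3 : ∀ n : ℕ, ∫⁻ r in Ioo 0 s, ∑' m : ℕ,
      ENNReal.ofReal (b n * b m) * ENNReal.ofReal (r ^ (n + m)) = ∑' m : ℕ, ∫⁻ r in Ioo 0 s,
      ENNReal.ofReal (b n * b m) * ENNReal.ofReal (r ^ (n + m)) :=
    fun n => lintegral_tsum (hm n)
  rw [h1, lintegral_tsum (fun n => AEMeasurable.ennreal_tsum (hm n))]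
  simp_rw [h3]
  have h2 : ∀ n m : ℕ, ∫⁻ r in Ioo 0 s, ENNReal.ofReal (b n * b m) * ENNReal.ofReal (r ^ (n + m)) =
      ENNReal.ofReal s * ENNReal.ofReal ((b n * s^n) * (b m * s^m) / (n+m+1)) := by
    intro n m
    have := hb n
    have := hb m
    rw [lintegral_const_mul _ (by fun_prop), lintegral_pow_Ioo s hs,
      ← ENNReal.ofReal_mul (by positivity), ← ENNReal.ofReal_mul (by positivity)]
    congr 1; push_cast; ring
  simp_rw [h2, ENNReal.tsum_mul_left]
  rw [mul_comm (16 : ENNReal), mul_assoc]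
  gcongr
  exact hilbert_ineq fun n => b n * s ^ n

lemma circle_coeff (f : ℂ → ℂ) (hf : DifferentiableOn ℂ f (Metric.ball 0 1)) (s : ℝ)
    (hs : s ∈ Ioo (0:ℝ) 1) (n : ℕ) :
    fourierCoeffOn (show -π < π by linarith [Real.pi_pos]) (fun θ : ℝ => f (circleMap 0 s θ)) n
      = gcoef f n * s ^ n := by
  have hd : DifferentiableOn ℂ f (Metric.closedBall 0 s) :=
    hf.mono (Metric.closedBall_subset_ball hs.2)
  have key := hd.circleIntegral_one_div_sub_center_pow_smul hs.1 n
  rw [fourierCoeffOn_eq_integral]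
  rw [circleIntegral] at key
  have hsne : (s:ℂ) ≠ 0 := by exact_mod_cast hs.1.ne'
  have per : Function.Periodic (fun θ : ℝ => deriv (circleMap 0 s) θ •
      (1 / (circleMap 0 s θ - 0) ^ (n + 1)) • f (circleMap 0 s θ)) (2 * π) := by
    intro θ
    simp only [deriv_circleMap, periodic_circleMap 0 s θ]
  have hshift := per.intervalIntegral_add_eq 0 (-π)
  rw [zero_add, show -π + 2 * π = π by ring, key] at hshift
  have hpt : ∀ θ : ℝ, deriv (circleMap 0 s) θ •
      (1 / (circleMap 0 s θ - 0) ^ (n + 1)) • f (circleMap 0 s θ) =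
      (Complex.I / s^n) * (fourier (-(n:ℤ)) (θ : AddCircle (π - -π)) • f (circleMap 0 s θ)) := by
    intro θ
    rw [fourier_coe_apply, deriv_circleMap]
    have hE : Complex.exp (2 * π * Complex.I * ((-(n:ℤ) : ℤ):ℂ) * θ / ((π - -π : ℝ) : ℂ)) =
      (Complex.exp (θ * Complex.I) ^ n)⁻¹ := by
      rw [← Complex.exp_nat_mul, ← Complex.exp_neg]
      congr 1
      have : (π : ℂ) ≠ 0 := by exact_mod_cast Real.pi_ne_zero
      push_cast
      field_simp
      ring
    rw [hE]
    simp only [circleMap, zero_add, sub_zero, smul_eq_mul]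
    have := Complex.exp_ne_zero (θ * Complex.I)
    field_simp
    ring
  simp_rw [hpt] at hshift
  rw [intervalIntegral.integral_const_mul] at hshift
  have hI := Complex.I_ne_zero
  have hpi : (π : ℂ) ≠ 0 := by exact_mod_cast Real.pi_ne_zero
  have hfac : (n.factorial : ℂ) ≠ 0 := by exact_mod_cast n.factorial_ne_zero
  have h3 : (∫ x in -π..π, fourier (-(n:ℤ)) (x : AddCircle (π - -π)) • f (circleMap 0 s x)) =
      2 * π * (gcoef f n * s^n) := by
    unfold gcoef
    rw [smul_eq_mul] at hshift
    field_simp at hshift ⊢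
    linear_combination -hshift
  rw [h3]
  rw [Complex.real_smul]
  push_cast
  field_simp
  ring

lemma parseval_le (f : ℂ → ℂ) (hf : DifferentiableOn ℂ f (Metric.ball 0 1)) (s : ℝ)
    (hs : s ∈ Ioo (0:ℝ) 1) :
    ENNReal.ofReal (2 * π) * ∑' n, ENNReal.ofReal ((‖gcoef f n‖ * s ^ n) ^ 2) ≤
      ∫⁻ θ in Ioo (-π) π, (‖f (circleMap 0 s θ)‖₊ : ENNReal) ^ 2 := by
  have hcont : Continuous fun θ : ℝ => f (circleMap 0 s θ) := by
    refine hf.continuousOn.comp_continuous (continuous_circleMap 0 s) fun θ => ?_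
    simp [abs_of_pos hs.1, hs.2]
  have hlt : -π < π := by linarith [Real.pi_pos]
  have hmem : MemLp (fun θ : ℝ => f (circleMap 0 s θ)) 2 (volume.restrict (Ioc (-π) π)) := by
    rw [memLp_two_iff_integrable_sq_norm hcont.aestronglyMeasurable]
    exact ((hcont.norm.pow 2).integrableOn_Icc).mono_set Ioc_subset_Icc_self
  have hP := hasSum_sq_fourierCoeffOn hlt hmem
  have hinj : Function.Injective (fun n : ℕ => (n : ℤ)) := Nat.cast_injective
  have h1 : ∑' n : ℕ, ENNReal.ofReal ((‖gcoef f n‖ * s ^ n) ^ 2) ≤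
      ENNReal.ofReal ((π - -π)⁻¹ • ∫ x in -π..π, ‖f (circleMap 0 s x)‖ ^ 2) := by
    rw [← hP.tsum_eq, ENNReal.ofReal_tsum_of_nonneg (fun i => by positivity) hP.summable]
    refine le_trans (le_of_eq ?_) (ENNReal.tsum_comp_le_tsum_of_injective hinj _)
    refine tsum_congr fun n => ?_
    rw [circle_coeff f hf s hs n, norm_mul, norm_pow, Complex.norm_real, Real.norm_of_nonneg hs.1.le]
  have h2 : ∫⁻ θ in Ioo (-π) π, (‖f (circleMap 0 s θ)‖₊ : ENNReal) ^ 2 =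
      ENNReal.ofReal (∫ x in -π..π, ‖f (circleMap 0 s x)‖ ^ 2) := by
    rw [intervalIntegral.integral_of_le hlt.le, integral_Ioc_eq_integral_Ioo,
      ofReal_integral_eq_lintegral_ofReal]
    · refine lintegral_congr fun θ => ?_
      rw [ENNReal.ofReal_pow (norm_nonneg _), ofReal_norm, enorm_eq_nnnorm]
    · exact ((hcont.norm.pow 2).integrableOn_Icc).mono_set Ioo_subset_Icc_self
    · exact Eventually.of_forall fun _ => by positivity
  rw [h2]
  calc _ ≤ ENNReal.ofReal (2 * π) * ENNReal.ofReal ((π - -π)⁻¹ • ∫ x in -π..π, ‖f (circleMap 0 s x)‖ ^ 2) := by gcongr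
    _ = _ := by
      rw [← ENNReal.ofReal_mul (by positivity), smul_eq_mul]
      congr 1
      have := Real.pi_ne_zero
      rw [show π - -π = 2 * π by ring]
      field_simp

lemma Minf_le (f : ℂ → ℂ) (hf : DifferentiableOn ℂ f (Metric.ball 0 1)) (r : ℝ)
    (hr : r ∈ Ioo (0:ℝ) 1) :
    ENNReal.ofReal (Minf f r) ≤ ∑' n, ENNReal.ofReal (‖gcoef f n‖ * r ^ n) := by
  by_cases htop : ∑' n, ENNReal.ofReal (‖gcoef f n‖ * r ^ n) = ⊤
  · rw [htop]; exact le_top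
  have hr0 := hr.1.le
  have hsum : Summable fun n => ‖gcoef f n‖ * r ^ n := by
    have h := ENNReal.summable_toReal htop
    refine h.congr fun n => ?_
    rw [ENNReal.toReal_ofReal (by positivity)]
  rw [← ENNReal.ofReal_tsum_of_nonneg (fun n => by positivity) hsum]
  refine ENNReal.ofReal_le_ofReal ?_
  refine csSup_le ?_ ?_
  · exact ((NormedSpace.sphere_nonempty).2 hr0).image _
  · rintro _ ⟨z, hz, rfl⟩
    have hz' : ‖z‖ = r := by simpa using hz
    have hzb : z ∈ Metric.ball (0:ℂ) 1 := by simp [hz', hr.2]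
    have hT := Complex.hasSum_taylorSeries_on_ball hf hzb
    show ‖f z‖ ≤ _
    rw [← hT.tsum_eq]
    refine tsum_of_norm_bounded hsum.hasSum fun n => le_of_eq ?_
    simp [gcoef, hz', div_eq_mul_inv]
    ring

lemma polar_lower (v : ℝ → ℝ) (hv : Measurable v) (f : ℂ → ℂ)
    (hf : DifferentiableOn ℂ f (Metric.ball 0 1)) :
    ∫⁻ s in Ioo (0:ℝ) 1, ENNReal.ofReal s * (ENNReal.ofReal (v s) *
      ∫⁻ θ in Ioo (-π) π, (‖f (circleMap 0 s θ)‖₊ : ENNReal) ^ 2) ≤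
    ∫⁻ z in Metric.ball (0:ℂ) 1, (‖f z‖₊ : ENNReal)^2 * ENNReal.ofReal (v ‖z‖) := by
  have hpc : ∀ p : ℝ × ℝ, Complex.polarCoord.symm p = circleMap 0 p.1 p.2 := by
    intro p
    rw [Complex.polarCoord_symm_apply, circleMap, zero_add, Complex.exp_mul_I]
    push_cast; rfl
  set S : Set (ℝ × ℝ) := Ioo (0:ℝ) 1 ×ˢ Ioo (-π) π with hS
  have hSm : MeasurableSet S := measurableSet_Ioo.prod measurableSet_Ioo
  have hmem : ∀ p ∈ S, circleMap 0 p.1 p.2 ∈ Metric.ball (0:ℂ) 1 := by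
    intro p hp
    simp [abs_of_pos hp.1.1, hp.1.2]
  have hcm : Continuous fun p : ℝ × ℝ => circleMap 0 p.1 p.2 := by
    unfold circleMap; fun_prop
  have hfc : ContinuousOn (fun p : ℝ × ℝ => f (circleMap 0 p.1 p.2)) S :=
    hf.continuousOn.comp hcm.continuousOn hmem
  have hfm : AEMeasurable (fun p : ℝ × ℝ => f (circleMap 0 p.1 p.2)) (volume.restrict S) :=
    hfc.aemeasurable hSm
  rw [← lintegral_indicator measurableSet_ball, ← Complex.lintegral_comp_polarCoord_symm]
  have hsub : S ⊆ polarCoord.target := by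
    rw [polarCoord_target]
    exact prod_mono Ioo_subset_Ioi_self le_rfl
  refine le_trans (le_of_eq ?_) (lintegral_mono_set hsub)
  have hcongr : ∫⁻ p in S, ENNReal.ofReal p.1 • (Metric.ball (0:ℂ) 1).indicator
      (fun z => (‖f z‖₊ : ENNReal)^2 * ENNReal.ofReal (v ‖z‖)) (Complex.polarCoord.symm p) =
      ∫⁻ p in S, ENNReal.ofReal p.1 * (ENNReal.ofReal (v p.1) *
        (‖f (circleMap 0 p.1 p.2)‖₊ : ENNReal) ^ 2) := by
    refine setLIntegral_congr_fun hSm fun p hp => ?_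
    have hn : ‖circleMap 0 p.1 p.2‖ = p.1 := by simp [abs_of_pos hp.1.1]
    simp only [hpc, smul_eq_mul]
    rw [indicator_of_mem (hmem p hp), hn, mul_comm (ENNReal.ofReal (v p.1))]
  rw [hcongr, hS, Measure.volume_eq_prod, setLIntegral_prod]
  · refine setLIntegral_congr_fun measurableSet_Ioo fun s hs => ?_
    simp only
    rw [lintegral_const_mul' _ _ ENNReal.ofReal_ne_top,
      lintegral_const_mul' _ _ ENNReal.ofReal_ne_top]
  · rw [← Measure.volume_eq_prod]
    refine AEMeasurable.fun_mul
      (ENNReal.measurable_ofReal.comp measurable_fst).aemeasurable (AEMeasurable.fun_mul ?_ ?_)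
    · exact (ENNReal.measurable_ofReal.comp (hv.comp measurable_fst)).aemeasurable
    · exact (hfm.nnnorm.coe_nnreal_ennreal).pow_const 2

lemma fubini_tri (A W : ℝ → ENNReal) (hA : Measurable A) (hW : Measurable W) :
    ∫⁻ r in Ioo (0:ℝ) 1, A r * ∫⁻ s in Ioo r 1, W s =
      ∫⁻ s in Ioo (0:ℝ) 1, W s * ∫⁻ r in Ioo 0 s, A r := by
  have hG : Measurable (Function.uncurry fun r s : ℝ =>
      {p : ℝ × ℝ | p.1 < p.2}.indicator (fun p => A p.1 * W p.2) (r, s)) := by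
    refine Measurable.indicator ?_ (measurableSet_lt measurable_fst measurable_snd)
    exact (hA.comp measurable_fst).mul (hW.comp measurable_snd)
  have hsw := lintegral_lintegral_swap (μ := volume.restrict (Ioo (0:ℝ) 1))
    (ν := volume.restrict (Ioo (0:ℝ) 1)) hG.aemeasurable
  have h1 : ∀ r ∈ Ioo (0:ℝ) 1, A r * ∫⁻ s in Ioo r 1, W s = ∫⁻ s in Ioo (0:ℝ) 1,
      {p : ℝ × ℝ | p.1 < p.2}.indicator (fun p => A p.1 * W p.2) (r, s) := by
    intro r hr
    rw [← lintegral_const_mul _ hW]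
    have : Ioo r 1 = Ioi r ∩ Ioo 0 1 := by
      ext x; simp only [mem_Ioo, mem_inter_iff, mem_Ioi]
      constructor
      · intro h; exact ⟨h.1, hr.1.trans h.1, h.2⟩
      · intro h; exact ⟨h.1, h.2.2⟩
    rw [this, ← setLIntegral_indicator measurableSet_Ioi]
    rfl
  have h2 : ∀ s ∈ Ioo (0:ℝ) 1, W s * ∫⁻ r in Ioo 0 s, A r = ∫⁻ r in Ioo (0:ℝ) 1,
      {p : ℝ × ℝ | p.1 < p.2}.indicator (fun p => A p.1 * W p.2) (r, s) := by
    intro s hs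
    rw [mul_comm, ← lintegral_mul_const _ hA]
    have : Ioo 0 s = Iio s ∩ Ioo 0 1 := by
      ext x; simp only [mem_Ioo, mem_inter_iff, mem_Iio]
      constructor
      · intro h; exact ⟨h.2, h.1, h.2.trans hs.2⟩
      · intro h; exact ⟨h.2.1, h.1⟩
    rw [this, ← setLIntegral_indicator measurableSet_Iio]
    rfl
  rw [setLIntegral_congr_fun measurableSet_Ioo h1, setLIntegral_congr_fun measurableSet_Ioo h2]
  exact hsw


/-- for every radial weight `ω`,
`∫_0^1 M_∞(r,f)² ω̂(r) dr ≤ C ‖f‖²_{A²_ω}` with an absolute constant `C`. -/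
theorem statement2 :
    ∃ C : ℝ, 0 < C ∧ ∀ v : ℝ → ℝ, RadialWeight v →
      ∀ f : ℂ → ℂ, DifferentiableOn ℂ f (Metric.ball 0 1) →
        ∫⁻ r in Set.Ioo (0:ℝ) 1, ENNReal.ofReal (Minf f r ^ 2 * hatw v r) ≤
          ENNReal.ofReal C * ((ENNReal.ofReal Real.pi)⁻¹ *
            ∫⁻ z in Metric.ball (0:ℂ) 1, (‖f z‖₊ : ENNReal)^2 * ENNReal.ofReal (v ‖z‖)) := by
  refine ⟨8, by norm_num, ?_⟩
  intro v hv f hf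
  obtain ⟨hvm, hvpos, hvint⟩ := hv
  set A : ℝ → ENNReal := fun r => (∑' n, ENNReal.ofReal (‖gcoef f n‖ * r ^ n)) ^ 2 with hA
  set W : ℝ → ENNReal := fun s => ENNReal.ofReal (v s) with hW
  set B : ℝ → ENNReal := fun s => ∑' n, ENNReal.ofReal ((‖gcoef f n‖ * s ^ n) ^ 2) with hB
  have hAm : Measurable A := by
    refine Measurable.pow_const (Measurable.ennreal_tsum fun n => ?_) 2
    fun_prop
  have hWm : Measurable W := ENNReal.measurable_ofReal.comp hvm
  have hpi0 : ENNReal.ofReal π ≠ 0 := by simp [Real.pi_pos]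
  have h1 : ∫⁻ r in Ioo (0:ℝ) 1, ENNReal.ofReal (Minf f r ^ 2 * hatw v r) ≤
      ∫⁻ r in Ioo (0:ℝ) 1, A r * ∫⁻ s in Ioo r 1, W s := by
    refine setLIntegral_mono' measurableSet_Ioo fun r hr => ?_
    rw [ENNReal.ofReal_mul (by positivity)]
    have hM0 : 0 ≤ Minf f r := by
      refine Real.sSup_nonneg ?_
      rintro _ ⟨z, _, rfl⟩
      exact norm_nonneg _
    refine mul_le_mul' ?_ (le_of_eq ?_)
    · rw [ENNReal.ofReal_pow hM0]
      exact pow_le_pow_left' (Minf_le f hf r hr) 2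
    · rw [hatw, intervalIntegral.integral_of_le hr.2.le, integral_Ioc_eq_integral_Ioo,
        ofReal_integral_eq_lintegral_ofReal]
      · exact hvint.mono_set (Ioo_subset_Ioo_left hr.1.le)
      · filter_upwards [ae_restrict_mem measurableSet_Ioo] with s hs
        exact (hvpos s ⟨(hr.1.trans hs.1).le, hs.2⟩).le
  have h2 : ∫⁻ s in Ioo (0:ℝ) 1, W s * ∫⁻ r in Ioo 0 s, A r ≤
      ∫⁻ s in Ioo (0:ℝ) 1, (ENNReal.ofReal 8 * (ENNReal.ofReal π)⁻¹) *
        (ENNReal.ofReal s * (W s *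
          ∫⁻ θ in Ioo (-π) π, (‖f (circleMap 0 s θ)‖₊ : ENNReal) ^ 2)) := by
    refine setLIntegral_mono' measurableSet_Ioo fun s hs => ?_
    have e1 := lintegral_sq_series (fun n => ‖gcoef f n‖) (fun n => norm_nonneg _) s hs.1
    have e2 := parseval_le f hf s hs
    calc W s * ∫⁻ r in Ioo 0 s, A r ≤ W s * (16 * ENNReal.ofReal s * B s) := by
          gcongr
      _ = (ENNReal.ofReal π * (ENNReal.ofReal π)⁻¹) * (W s * (16 * ENNReal.ofReal s * B s)) := by
          rw [ENNReal.mul_inv_cancel hpi0 ENNReal.ofReal_ne_top, one_mul]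
      _ = (ENNReal.ofReal 8 * (ENNReal.ofReal π)⁻¹) *
        (ENNReal.ofReal s * (W s * (ENNReal.ofReal (2 * π) * B s))) := by
          rw [ENNReal.ofReal_mul (by norm_num : (0:ℝ) ≤ 2)]
          simp only [ENNReal.ofReal_ofNat]
          rw [show (16 : ENNReal) = 8 * 2 by norm_num]
          ring
      _ ≤ _ := by gcongr
  calc _ ≤ _ := h1
    _ = _ := fubini_tri A W hAm hWm
    _ ≤ _ := h2
    _ = (ENNReal.ofReal 8 * (ENNReal.ofReal π)⁻¹) * ∫⁻ s in Ioo (0:ℝ) 1,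
        (ENNReal.ofReal s * (W s *
          ∫⁻ θ in Ioo (-π) π, (‖f (circleMap 0 s θ)‖₊ : ENNReal) ^ 2)) :=
        lintegral_const_mul' _ _
          (ENNReal.mul_ne_top ENNReal.ofReal_ne_top (ENNReal.inv_ne_top.2 hpi0))
    _ ≤ _ := mul_le_mul' le_rfl (polar_lower v hvm f hf)
    _ = _ := by rw [mul_assoc]

end
end

section
/- Let v be a radial weight in the class D̂ satisfying ∫₀¹ (1-s)²/v̂(s) ds < ∞, M₁(v) = sup_{0<r<1} (∫_r¹ v̂(s)/(1-s)² ds)^{1/2} (∫₀^r 1/v̂(s) ds)^{1/2} < ∞, and M₂(v) = sup_{0<r<1} (∫₀^r v̂(s)/(1-s)⁴ ds)^{1/2} (∫_r¹ (1-s)²/v̂(s) ds)^{1/2} < ∞. Then there exists C = C(v) > 0 such that for every measurable φ : [0,1) → ℂ with ‖φ‖_{L²_{V̂₂}} < ∞, the function H̃(φ)(z) = ∫₀¹ |φ(t)|/(1-tz) dt is analytic on 𝔻 and satisfies ‖H̃(φ)‖_{D_v} ≤ C · M₁(v) · M₂(v) · ‖φ‖_{L²_{V̂₂}}. -/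
open MeasureTheory Real Set Filter

noncomputable section

namespace HT

lemma mono_lint {f g : ℝ → ℝ} {a b : ℝ} (hab : a ≤ b) (hf : MonotoneOn f (Icc a b))
    (hd : ∀ᵐ x, x ∈ Ioo a b → HasDerivAt f (g x) x) :
    ∫⁻ x in Ioo a b, ENNReal.ofReal (g x) ≤ ENNReal.ofReal (f b - f a) := by
  have h1 : MonotoneOn f (uIcc a b) := by rwa [uIcc_of_le hab]
  have hi := h1.intervalIntegrable_deriv
  have hm := h1.intervalIntegral_deriv_mem_uIcc
  have hfab : f a ≤ f b := hf (left_mem_Icc.2 hab) (right_mem_Icc.2 hab) hab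
  rw [uIcc_of_le (by linarith)] at hm
  have e1 : ∫⁻ x in Ioo a b, ENNReal.ofReal (g x) = ∫⁻ x in Ioo a b, ENNReal.ofReal (deriv f x) := by
    apply setLIntegral_congr_fun_ae measurableSet_Ioo
    filter_upwards [hd] with x hx hxm
    rw [(hx hxm).deriv]
  rw [e1, ← ofReal_integral_eq_lintegral_ofReal]
  · apply ENNReal.ofReal_le_ofReal
    rw [← integral_Ioc_eq_integral_Ioo, ← intervalIntegral.integral_of_le hab]
    exact hm.2
  · exact ((intervalIntegrable_iff_integrableOn_Ioo_of_le hab).1 hi)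
  · filter_upwards [ae_restrict_mem measurableSet_Ioo] with x hx
    have : DifferentiableAt ℝ f x ∨ ¬ DifferentiableAt ℝ f x := em _
    rcases this with h | h
    · rw [← h.derivWithin (uniqueDiffOn_Icc (lt_trans hx.1 hx.2) x (Ioo_subset_Icc_self hx))]
      exact hf.derivWithin_nonneg
    · simp [deriv_zero_of_not_differentiableAt h]

section hat

lemma ii {u : ℝ → ℝ} (hi : IntegrableOn u (Ioo 0 1)) {a b : ℝ} (ha : a ∈ Icc (0:ℝ) 1) (hb : b ∈ Icc (0:ℝ) 1) :
    IntervalIntegrable u volume a b := by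
  have : IntervalIntegrable u volume 0 1 :=
    (intervalIntegrable_iff_integrableOn_Ioo_of_le zero_le_one).2 hi
  apply this.mono_set
  rw [uIcc_of_le zero_le_one]
  exact uIcc_subset_Icc ha hb

lemma hat_diff {u : ℝ → ℝ} (hi : IntegrableOn u (Ioo 0 1)) {a b : ℝ} (ha : a ∈ Icc (0:ℝ) 1) (hb : b ∈ Icc (0:ℝ) 1) :
    hatw u a - hatw u b = ∫ s in a..b, u s := by
  unfold hatw
  have h1 : (1:ℝ) ∈ Icc (0:ℝ) 1 := by simp
  rw [← intervalIntegral.integral_add_adjacent_intervals (ii hi ha hb) (ii hi hb h1)]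
  ring

lemma hat_cont {u : ℝ → ℝ} (hi : IntegrableOn u (Ioo 0 1)) : ContinuousOn (hatw u) (Icc 0 1) := by
  have h0 : (0:ℝ) ∈ Icc (0:ℝ) 1 := by simp
  have h1 : (1:ℝ) ∈ Icc (0:ℝ) 1 := by simp
  have : ContinuousOn (fun x => hatw u 0 - ∫ s in (0:ℝ)..x, u s) (Icc 0 1) := by
    apply continuousOn_const.sub
    have := intervalIntegral.continuousOn_primitive_interval' (ii hi h0 h1) (a := 0) (by simp)
    rwa [uIcc_of_le zero_le_one] at this
  apply this.congr
  intro x hx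
  have := hat_diff hi h0 hx
  simp only
  linarith

lemma hat_deriv {u : ℝ → ℝ} (hi : IntegrableOn u (Ioo 0 1)) : ∀ᵐ x, x ∈ Ioo (0:ℝ) 1 → HasDerivAt (hatw u) (- u x) x := by
  have h0 : (0:ℝ) ∈ Icc (0:ℝ) 1 := by simp
  have h1 : (1:ℝ) ∈ Icc (0:ℝ) 1 := by simp
  filter_upwards [(ii hi h0 h1).ae_hasDerivAt_integral] with x hx hxm
  have := hx (by rw [uIcc_of_le zero_le_one]; exact Ioo_subset_Icc_self hxm) 0 (by simp)
  have := this.const_sub (hatw u 0)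
  refine this.congr_of_eventuallyEq ?_
  filter_upwards [Ioo_mem_nhds hxm.1 hxm.2] with y hy
  have := hat_diff hi h0 (Ioo_subset_Icc_self hy)
  linarith

lemma hat_anti {u : ℝ → ℝ} (hp : ∀ r ∈ Ico (0:ℝ) 1, 0 < u r) (hi : IntegrableOn u (Ioo 0 1))
    : AntitoneOn (hatw u) (Icc 0 1) := by
  intro a ha b hb hab
  have := hat_diff hi ha hb
  have h2 : 0 ≤ ∫ s in a..b, u s := by
    rw [intervalIntegral.integral_of_le hab, integral_Ioc_eq_integral_Ioo]
    apply setIntegral_nonneg measurableSet_Ioo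
    intro x hx
    exact (hp x ⟨by linarith [ha.1, hx.1], by linarith [hb.2, hx.2]⟩).le
  linarith

lemma hat_lint {u : ℝ → ℝ} (hp : ∀ r ∈ Ico (0:ℝ) 1, 0 < u r) (hi : IntegrableOn u (Ioo 0 1))
    {r : ℝ} (hr : r ∈ Ico (0:ℝ) 1) :
    ∫⁻ s in Ioo r 1, ENNReal.ofReal (u s) = ENNReal.ofReal (hatw u r) := by
  have h1 : (1:ℝ) ∈ Icc (0:ℝ) 1 := by simp
  rw [hatw, intervalIntegral.integral_of_le hr.2.le, integral_Ioc_eq_integral_Ioo,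
    ofReal_integral_eq_lintegral_ofReal]
  · exact hi.mono_set (Ioo_subset_Ioo_left hr.1)
  · filter_upwards [ae_restrict_mem measurableSet_Ioo] with x hx
    exact (hp x ⟨by linarith [hr.1, hx.1], hx.2⟩).le

lemma hat_pos {u : ℝ → ℝ} (hp : ∀ r ∈ Ico (0:ℝ) 1, 0 < u r) (hi : IntegrableOn u (Ioo 0 1))
    {r : ℝ} (hr : r ∈ Ico (0:ℝ) 1) : 0 < hatw u r := by
  have h1 : (1:ℝ) ∈ Icc (0:ℝ) 1 := by simp
  apply intervalIntegral.intervalIntegral_pos_of_pos_on (ii hi (Ico_subset_Icc_self hr) h1) _ hr.2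
  intro x hx
  exact hp x ⟨by linarith [hr.1, hx.1], hx.2⟩

lemma hat_half {u : ℝ → ℝ} (hp : ∀ r ∈ Ico (0:ℝ) 1, 0 < u r) (hi : IntegrableOn u (Ioo 0 1))
    {r : ℝ} (hr : r ∈ Ico (0:ℝ) 1) :
    ∫⁻ s in Ioo r 1, ENNReal.ofReal (u s / √(hatw u s)) ≤ ENNReal.ofReal (2 * √(hatw u r)) := by
  have := mono_lint (f := fun x => - (2 * √(hatw u x))) (g := fun s => u s / √(hatw u s)) hr.2.le ?_ ?_
  · refine this.trans (ENNReal.ofReal_le_ofReal ?_)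
    have : hatw u 1 = 0 := by simp [hatw]
    simp [this]
  · intro a ha b hb hab
    have := hat_anti hp hi ⟨hr.1.trans ha.1, ha.2⟩ ⟨hr.1.trans hb.1, hb.2⟩ hab
    have := Real.sqrt_le_sqrt this
    simp only
    linarith
  · filter_upwards [hat_deriv hi] with x hx hxm
    have hx' : x ∈ Ioo (0:ℝ) 1 := ⟨hr.1.trans_lt hxm.1, hxm.2⟩
    have hpos := hat_pos hp hi (Ioo_subset_Ico_self hx')
    have := (((hx hx').sqrt hpos.ne').const_mul 2).neg
    refine HasDerivAt.congr_deriv this ?_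
    have hq := Real.sqrt_pos.2 hpos
    generalize √(hatw u x) = q at hq ⊢
    field_simp

lemma hat_threehalf {u : ℝ → ℝ} (hp : ∀ r ∈ Ico (0:ℝ) 1, 0 < u r) (hi : IntegrableOn u (Ioo 0 1))
    {t : ℝ} (ht : t ∈ Ico (0:ℝ) 1) :
    ∫⁻ s in Ioo 0 t, ENNReal.ofReal (u s / √(hatw u s) ^ 3) ≤
      ENNReal.ofReal (2 / √(hatw u t)) := by
  have h0 : (0:ℝ) ∈ Ico (0:ℝ) 1 := by simp
  have := mono_lint (f := fun x => 2 * (√(hatw u x))⁻¹) (g := fun s => u s / √(hatw u s) ^ 3) ht.1 ?_ ?_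
  · refine this.trans (ENNReal.ofReal_le_ofReal ?_)
    have := Real.sqrt_pos.2 (hat_pos hp hi h0)
    have : 0 < (√(hatw u 0))⁻¹ := by positivity
    simp only [div_eq_mul_inv]
    linarith
  · intro a ha b hb hab
    have h1 := hat_anti hp hi ⟨ha.1, ha.2.trans ht.2.le⟩ ⟨hb.1, hb.2.trans ht.2.le⟩ hab
    have h2 := Real.sqrt_le_sqrt h1
    have hbp := Real.sqrt_pos.2 (hat_pos hp hi (r := b) ⟨hb.1, hb.2.trans_lt ht.2⟩)
    have := inv_anti₀ hbp h2
    simp only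
    linarith
  · filter_upwards [hat_deriv hi] with x hx hxm
    have hx' : x ∈ Ioo (0:ℝ) 1 := ⟨hxm.1, hxm.2.trans ht.2⟩
    have hpos := hat_pos hp hi (Ioo_subset_Ico_self hx')
    have hq := Real.sqrt_pos.2 hpos
    have := (((hx hx').sqrt hpos.ne').inv hq.ne').const_mul 2
    refine HasDerivAt.congr_deriv this ?_
    generalize √(hatw u x) = q at hq ⊢
    field_simp

end hat

lemma half_mul {a b M : ENNReal} (h : a ^ (1/2:ℝ) * b ^ (1/2:ℝ) ≤ M) : a * b ≤ M ^ 2 := by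
  rw [← ENNReal.mul_rpow_of_nonneg _ _ (by norm_num)] at h
  have := ENNReal.pow_le_pow_left h (n := 2)
  rwa [← ENNReal.rpow_natCast, ← ENNReal.rpow_mul, show (1/2:ℝ) * ((2:ℕ):ℝ) = 1 by norm_num,
    ENNReal.rpow_one] at this

lemma div_bd {a b : ENNReal} {c N : ℝ} (hc : 0 < c) (h1 : ENNReal.ofReal c ≤ a)
    (h2 : a * b ≤ ENNReal.ofReal N) : b ≤ ENNReal.ofReal (N / c) := by
  rw [ENNReal.ofReal_div_of_pos hc, ENNReal.le_div_iff_mul_le]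
  · rw [mul_comm]
    exact (mul_le_mul_left h1 b).trans h2
  · left; simpa using hc
  · left; simp

lemma lint_ge {S : Set ℝ} {g : ℝ → ℝ} {a b c : ℝ} (hc : 0 ≤ c) (hS : Ioo a b ⊆ S)
    (hg : ∀ x ∈ Ioo a b, c ≤ g x) :
    ENNReal.ofReal (c * (b - a)) ≤ ∫⁻ x in S, ENNReal.ofReal (g x) := by
  calc ENNReal.ofReal (c * (b - a)) = ∫⁻ x in Ioo a b, ENNReal.ofReal c := by
        rw [setLIntegral_const, Real.volume_Ioo, ENNReal.ofReal_mul hc]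
    _ ≤ ∫⁻ x in Ioo a b, ENNReal.ofReal (g x) :=
        setLIntegral_mono' measurableSet_Ioo fun x hx => ENNReal.ofReal_le_ofReal (hg x hx)
    _ ≤ _ := lintegral_mono_set hS

lemma fact1 {v : ℝ → ℝ} (hv : RadialWeight v) (hD : DoublingD v) (hM1 : M1v v < ⊤) :
    ∃ C : ℝ, 0 < C ∧ ∀ r ∈ Ico (0:ℝ) 1,
      ∫⁻ s in Ioo 0 r, ENNReal.ofReal (1 / hatw v s) ≤ ENNReal.ofReal (C * (1 - r) / hatw v r) := by
  obtain ⟨hvm, hp, hi⟩ := hv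
  obtain ⟨D, hD1, hD⟩ := hD
  refine ⟨((M1v v).toReal ^ 2 + 1) * (2 * D), by positivity, fun r hr => ?_⟩
  rcases hr.1.eq_or_lt with h0 | h0
  · simp [← h0]
  have hr1 : 0 < 1 - r := by linarith [hr.2]
  have hw := hat_pos hp hi hr
  have hm : (1 + r) / 2 ∈ Ico (0:ℝ) 1 := ⟨by linarith [hr.1], by linarith [hr.2]⟩
  have hwm := hat_pos hp hi hm
  have h1 : (∫⁻ s in Set.Ioo r 1, ENNReal.ofReal (hatw v s / (1-s)^2)) *
    (∫⁻ s in Set.Ioo (0:ℝ) r, ENNReal.ofReal (1 / hatw v s)) ≤ (M1v v) ^ 2 := by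
    apply half_mul
    unfold M1v
    exact le_iSup₂ (f := fun r (_ : r ∈ Set.Ioo (0:ℝ) 1) =>
      (∫⁻ s in Set.Ioo r 1, ENNReal.ofReal (hatw v s / (1-s)^2)) ^ (1/2 : ℝ) *
    (∫⁻ s in Set.Ioo (0:ℝ) r, ENNReal.ofReal (1 / hatw v s)) ^ (1/2 : ℝ)) r ⟨h0, hr.2⟩
  have h2 : (M1v v) ^ 2 ≤ ENNReal.ofReal ((M1v v).toReal ^ 2 + 1) := by
    rw [← ENNReal.ofReal_toReal hM1.ne, ← ENNReal.ofReal_pow ENNReal.toReal_nonneg]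
    apply ENNReal.ofReal_le_ofReal
    rw [ENNReal.toReal_ofReal ENNReal.toReal_nonneg]; linarith
  have h3 : ENNReal.ofReal (hatw v r / (2 * D * (1 - r))) ≤
      ∫⁻ s in Set.Ioo r 1, ENNReal.ofReal (hatw v s / (1-s)^2) := by
    refine le_trans (le_of_eq ?_) (lint_ge (a := r) (b := (1+r)/2) (c := hatw v r / D / (1-r)^2)
      (by positivity) (Ioo_subset_Ioo_right hm.2.le) ?_)
    · congr 1
      field_simp
      ring
    · intro x hx
      have hx1 : 0 < 1 - x := by linarith [hx.2, hm.2]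
      have : hatw v ((1+r)/2) ≤ hatw v x := hat_anti hp hi
        ⟨by linarith [hx.1], by linarith⟩ (Ico_subset_Icc_self hm) hx.2.le
      have h4 : hatw v r / D ≤ hatw v x := by
        rw [div_le_iff₀ (by linarith)]
        have := mul_le_mul_of_nonneg_left this (show 0 ≤ D by linarith)
        linarith [hD r hr]
      have hx0 : 0 < hatw v x := hwm.trans_le this
      have : (1-x)^2 ≤ (1-r)^2 := by
        apply pow_le_pow_left₀ hx1.le; linarith [hx.1]
      gcongr
  refine (div_bd (by positivity) h3 (h1.trans h2)).trans (le_of_eq ?_)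
  congr 1
  field_simp

/-- the dual weight -/
def uw (v : ℝ → ℝ) (s : ℝ) : ℝ := (1 - s) ^ 2 / hatw v s

lemma uw_pos {v : ℝ → ℝ} (hv : RadialWeight v) : ∀ r ∈ Ico (0:ℝ) 1, 0 < uw v r := by
  intro r hr
  have := hat_pos hv.2.1 hv.2.2 hr
  have : 0 < 1 - r := by linarith [hr.2]
  unfold uw
  positivity

lemma hat_contIoo {v : ℝ → ℝ} (hv : RadialWeight v) : ContinuousOn (hatw v) (Ioo 0 1) :=
  (hat_cont hv.2.2).mono Ioo_subset_Icc_self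

lemma uw_int {v : ℝ → ℝ} (hv : RadialWeight v)
    (hvg2 : ∫⁻ s in Set.Ioo (0:ℝ) 1, ENNReal.ofReal ((1-s)^2 / hatw v s) < ⊤) :
    IntegrableOn (uw v) (Ioo 0 1) := by
  have hc : ContinuousOn (uw v) (Ioo 0 1) := by
    unfold uw
    apply ContinuousOn.div (by fun_prop) (hat_contIoo hv)
    intro x hx
    exact (hat_pos hv.2.1 hv.2.2 (Ioo_subset_Ico_self hx)).ne'
  refine ⟨hc.aestronglyMeasurable measurableSet_Ioo, ?_⟩
  rw [hasFiniteIntegral_iff_ofReal]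
  · exact hvg2
  · filter_upwards [ae_restrict_mem measurableSet_Ioo] with x hx
    exact (uw_pos hv x (Ioo_subset_Ico_self hx)).le

lemma fact2lo {v : ℝ → ℝ} (hv : RadialWeight v)
    (hvg2 : ∫⁻ s in Set.Ioo (0:ℝ) 1, ENNReal.ofReal ((1-s)^2 / hatw v s) < ⊤)
    {r : ℝ} (hr : r ∈ Ico (0:ℝ) 1) : (1 - r) ^ 3 / hatw v r ≤ 8 * hatw (uw v) r := by
  have hw := hat_pos hv.2.1 hv.2.2 hr
  have hr1 : 0 < 1 - r := by linarith [hr.2]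
  have hU := hat_pos (uw_pos hv) (uw_int hv hvg2) hr
  have h := lint_ge (S := Ioo r 1) (g := uw v) (a := r) (b := (1+r)/2)
    (c := ((1-r)/2)^2 / hatw v r) (by positivity) (Ioo_subset_Ioo_right (by linarith)) ?_
  · rw [hat_lint (uw_pos hv) (uw_int hv hvg2) hr, ENNReal.ofReal_le_ofReal_iff hU.le] at h
    calc _ = 8 * (((1-r)/2)^2 / hatw v r * ((1 + r) / 2 - r)) := by field_simp; ring
      _ ≤ _ := by linarith
  · intro x hx
    unfold uw
    have hxm : x ∈ Ico (0:ℝ) 1 := ⟨by linarith [hr.1, hx.1], by linarith [hx.2]⟩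
    have hx0 := hat_pos hv.2.1 hv.2.2 hxm
    have : hatw v x ≤ hatw v r := hat_anti hv.2.1 hv.2.2 (Ico_subset_Icc_self hr)
      (Ico_subset_Icc_self hxm) hx.1.le
    have : (1-r)/2 ≤ 1 - x := by linarith [hx.2]
    gcongr

lemma fact2hi {v : ℝ → ℝ} (hv : RadialWeight v)
    (hvg2 : ∫⁻ s in Set.Ioo (0:ℝ) 1, ENNReal.ofReal ((1-s)^2 / hatw v s) < ⊤)
    (hM2 : M2v v < ⊤) :
    ∃ C : ℝ, 0 < C ∧ ∀ r ∈ Ico (0:ℝ) 1, hatw (uw v) r ≤ C * ((1 - r) ^ 3 / hatw v r) := by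
  have hp := hv.2.1
  have hi := hv.2.2
  have hup := uw_pos hv
  have hui := uw_int hv hvg2
  have h00 : (0:ℝ) ∈ Ico (0:ℝ) 1 := by simp
  have hw0 := hat_pos hp hi h00
  have hU0 := hat_pos hup hui h00
  refine ⟨max (((M2v v).toReal ^ 2 + 1) * 16) (8 * hatw v 0 * hatw (uw v) 0),
    lt_max_of_lt_left (by positivity), fun r hr => ?_⟩
  have hr1 : 0 < 1 - r := by linarith [hr.2]
  have hw := hat_pos hp hi hr
  have hU := hat_pos hup hui hr
  rcases lt_or_ge r (1/2) with h2 | h2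
  · have a1 : hatw (uw v) r ≤ hatw (uw v) 0 := hat_anti hup hui (by simp)
      (Ico_subset_Icc_self hr) hr.1
    have a2 : hatw v r ≤ hatw v 0 := hat_anti hp hi (by simp) (Ico_subset_Icc_self hr) hr.1
    have a3 : (1/2:ℝ)^3 ≤ (1-r)^3 := pow_le_pow_left₀ (by norm_num) (by linarith) 3
    calc hatw (uw v) r ≤ (8 * hatw v 0 * hatw (uw v) 0) * ((1/2)^3 / hatw v 0) := by
          field_simp; linarith
      _ ≤ _ := by
          gcongr
          exact le_max_right _ _
  have h0 : 0 < r := by linarith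
  have h1 : (∫⁻ s in Set.Ioo (0:ℝ) r, ENNReal.ofReal (hatw v s / (1-s)^4)) *
    (∫⁻ s in Set.Ioo r 1, ENNReal.ofReal ((1-s)^2 / hatw v s)) ≤ (M2v v) ^ 2 := by
    apply half_mul
    unfold M2v
    exact le_iSup₂ (f := fun r (_ : r ∈ Set.Ioo (0:ℝ) 1) =>
      (∫⁻ s in Set.Ioo (0:ℝ) r, ENNReal.ofReal (hatw v s / (1-s)^4)) ^ (1/2 : ℝ) *
    (∫⁻ s in Set.Ioo r 1, ENNReal.ofReal ((1-s)^2 / hatw v s)) ^ (1/2 : ℝ)) r ⟨h0, hr.2⟩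
  have h2 : (M2v v) ^ 2 ≤ ENNReal.ofReal ((M2v v).toReal ^ 2 + 1) := by
    rw [← ENNReal.ofReal_toReal hM2.ne, ← ENNReal.ofReal_pow ENNReal.toReal_nonneg]
    apply ENNReal.ofReal_le_ofReal
    rw [ENNReal.toReal_ofReal ENNReal.toReal_nonneg]; linarith
  have h3 : ENNReal.ofReal (hatw v r / (16 * (1 - r) ^ 3)) ≤
      ∫⁻ s in Set.Ioo (0:ℝ) r, ENNReal.ofReal (hatw v s / (1-s)^4) := by
    refine le_trans (le_of_eq ?_) (lint_ge (a := 2 * r - 1) (b := r)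
      (c := hatw v r / (2 * (1-r))^4)
      (by positivity) (Ioo_subset_Ioo_left (by linarith)) ?_)
    · congr 1
      field_simp
      ring
    · intro x hx
      have hx1 : 0 < 1 - x := by linarith [hx.2, hr.2]
      have : hatw v r ≤ hatw v x := hat_anti hp hi
        ⟨by linarith [hx.1], by linarith⟩ (Ico_subset_Icc_self hr) hx.2.le
      have hx0 : 0 < hatw v x := hw.trans_le this
      have : (1-x)^4 ≤ (2 * (1-r))^4 := by
        apply pow_le_pow_left₀ hx1.le; linarith [hx.1]
      gcongr
  have h4 := (div_bd (by positivity) h3 (h1.trans h2))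
  have h5 := hat_lint hup hui hr
  simp only [uw] at h5
  rw [h5, ENNReal.ofReal_le_ofReal_iff (by positivity)] at h4
  refine le_trans h4 ?_
  calc _ = (((M2v v).toReal ^ 2 + 1) * 16) * ((1 - r) ^ 3 / hatw v r) := by field_simp
    _ ≤ _ := by
      gcongr
      exact le_max_left _ _

lemma sqrt_cube {x : ℝ} (hx : 0 ≤ x) : √(x ^ 3) = √x ^ 3 := by
  rw [Real.sqrt_eq_iff_mul_self_eq (by positivity) (by positivity)]
  have := Real.sq_sqrt hx
  symm
  calc √x ^ 3 * √x ^ 3 = (√x ^ 2) ^ 3 := by ring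
    _ = x ^ 3 := by rw [this]

lemma lint_cmul {S : Set ℝ} (hS : MeasurableSet S) {f g : ℝ → ℝ} {c B : ℝ} (hc : 0 ≤ c)
    (h : ∀ x ∈ S, f x ≤ c * g x) (hg : ∫⁻ x in S, ENNReal.ofReal (g x) ≤ ENNReal.ofReal B) :
    ∫⁻ x in S, ENNReal.ofReal (f x) ≤ ENNReal.ofReal (c * B) := by
  calc ∫⁻ x in S, ENNReal.ofReal (f x) ≤ ∫⁻ x in S, ENNReal.ofReal c * ENNReal.ofReal (g x) :=
        setLIntegral_mono' hS fun x hx => by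
          rw [← ENNReal.ofReal_mul hc]; exact ENNReal.ofReal_le_ofReal (h x hx)
    _ = ENNReal.ofReal c * ∫⁻ x in S, ENNReal.ofReal (g x) :=
        lintegral_const_mul' _ _ ENNReal.ofReal_ne_top
    _ ≤ _ := by
        rw [ENNReal.ofReal_mul hc]; gcongr

lemma lint_split (f : ℝ → ENNReal) (r : ℝ) :
    ∫⁻ x in Ioo 0 1, f x ≤ (∫⁻ x in Ioo 0 r, f x) + ∫⁻ x in Ioo r 1, f x := by
  rw [setLIntegral_congr (Ioo_ae_eq_Ico (a := r) (b := (1:ℝ)))]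
  refine le_trans (lintegral_mono_set ?_) (lintegral_union_le _ _ _)
  intro x hx
  rcases lt_or_ge x r with h | h
  · exact Or.inl ⟨hx.1, h⟩
  · exact Or.inr ⟨h, hx.2⟩

lemma lint_invsq {r : ℝ} (hr : r ∈ Ico (0:ℝ) 1) :
    ∫⁻ s in Ioo 0 r, ENNReal.ofReal (1 / (1 - s) ^ 2) ≤ ENNReal.ofReal (1 / (1 - r)) := by
  have := mono_lint (f := fun x => (1 - x)⁻¹) (g := fun s => 1 / (1 - s) ^ 2) hr.1 ?_ ?_
  · refine this.trans (ENNReal.ofReal_le_ofReal ?_)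
    simp
  · intro a ha b hb hab
    have : 0 < 1 - b := by linarith [hb.2, hr.2]
    simp only
    gcongr
  · refine Filter.Eventually.of_forall fun x hx => ?_
    have : 1 - x ≠ 0 := by linarith [hx.2, hr.2]
    refine HasDerivAt.congr_deriv (((hasDerivAt_id x).const_sub 1).inv this) ?_
    simp

lemma schur1 {v : ℝ → ℝ} (hv : RadialWeight v) (hD : DoublingD v)
    (hvg2 : ∫⁻ s in Set.Ioo (0:ℝ) 1, ENNReal.ofReal ((1-s)^2 / hatw v s) < ⊤)
    (hM1 : M1v v < ⊤) (hM2 : M2v v < ⊤) :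
    ∃ K : ℝ, 0 < K ∧ ∀ r ∈ Ico (0:ℝ) 1,
      ∫⁻ t in Ioo 0 1, ENNReal.ofReal (√(1 - t) / √(hatw v t) * (1 / √(1 - t * r) ^ 3)) ≤
        ENNReal.ofReal (K / √(hatw v r)) := by
  obtain ⟨C1, hC1, h1⟩ := fact1 hv hD hM1
  obtain ⟨C2, hC2, h2⟩ := fact2hi hv hvg2 hM2
  have hp := hv.2.1
  have hi := hv.2.2
  have hup := uw_pos hv
  have hui := uw_int hv hvg2
  refine ⟨(C1 + 1) + 2 * C2, by positivity, fun r hr => ?_⟩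
  have hr' := hr
  have hr1 : 0 < 1 - r := by linarith [hr.2]
  have hw := hat_pos hp hi hr'
  have hU := hat_pos hup hui hr'
  have hW := Real.sqrt_pos.2 hw
  refine (lint_split _ r).trans ?_
  rw [add_div, ENNReal.ofReal_add (by positivity) (by positivity)]
  gcongr ?_ + ?_
  · calc _ ≤ ∫⁻ t in Ioo 0 r, (ENNReal.ofReal (√(hatw v r) / (1 - r)) * ENNReal.ofReal (1 / hatw v t)
          + ENNReal.ofReal ((1 - r) / √(hatw v r)) * ENNReal.ofReal (1 / (1 - t) ^ 2)) := by
          refine setLIntegral_mono' measurableSet_Ioo fun t ht => ?_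
          have ht1 : 0 < 1 - t := by linarith [hr.2, ht.2]
          have htw := hat_pos hp hi (r := t) ⟨ht.1.le, by linarith⟩
          have htr : 1 - t ≤ 1 - t * r := by nlinarith [ht.1]
          rw [← ENNReal.ofReal_mul (by positivity), ← ENNReal.ofReal_mul (by positivity),
            ← ENNReal.ofReal_add (by positivity) (by positivity)]
          apply ENNReal.ofReal_le_ofReal
          have hq := Real.sqrt_le_sqrt htr
          have hq0 := Real.sqrt_pos.2 ht1
          have hy := Real.sqrt_pos.2 htw
          have e1 : √(1-t) / √(hatw v t) * (1 / √(1 - t * r) ^ 3) ≤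
              √(1-t) / √(hatw v t) * (1 / √(1 - t) ^ 3) := by gcongr
          have e2 : √(1-t) / √(hatw v t) * (1 / √(1 - t) ^ 3) = 1 / (√(hatw v t) * (1 - t)) := by
            have hs := Real.sq_sqrt ht1.le
            generalize √(1-t) = q at *
            rw [← hs]
            field_simp
          rw [e2] at e1
          refine e1.trans ?_
          rw [← Real.sq_sqrt htw.le, Real.sqrt_sq hy.le]
          have := sq_nonneg (√(hatw v r) / (√(hatw v t) * (1 - r)) - 1 / (1 - t))
          generalize √(hatw v t) = y at *
          generalize √(hatw v r) = W at *
          have e3 : W / (1-r) * (1 / y^2) + (1-r)/W * (1 / (1-t)^2) - 1 / (y * (1-t)) =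
            (1-r)/W * (W / (y * (1 - r)) - 1 / (1 - t))^2 + 1 / (y * (1-t)) := by
            field_simp; ring
          have : 0 ≤ (1-r)/W * (W / (y * (1 - r)) - 1 / (1 - t))^2 + 1 / (y * (1-t)) := by
            positivity
          linarith
      _ = ENNReal.ofReal (√(hatw v r) / (1 - r)) * (∫⁻ t in Ioo 0 r, ENNReal.ofReal (1 / hatw v t))
          + ENNReal.ofReal ((1 - r) / √(hatw v r)) *
            ∫⁻ t in Ioo 0 r, ENNReal.ofReal (1 / (1 - t) ^ 2) := by
          rw [lintegral_add_right _ (by fun_prop), lintegral_const_mul' _ _ ENNReal.ofReal_ne_top,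
            lintegral_const_mul' _ _ ENNReal.ofReal_ne_top]
      _ ≤ ENNReal.ofReal (√(hatw v r) / (1 - r)) * ENNReal.ofReal (C1 * (1 - r) / hatw v r)
          + ENNReal.ofReal ((1 - r) / √(hatw v r)) * ENNReal.ofReal (1 / (1 - r)) := by
          gcongr
          · exact h1 r hr'
          · exact lint_invsq hr'
      _ = _ := by
          rw [← ENNReal.ofReal_mul (by positivity), ← ENNReal.ofReal_mul (by positivity),
            ← ENNReal.ofReal_add (by positivity) (by positivity)]
          congr 1
          nth_rw 2 [← Real.sq_sqrt hw.le]
          generalize √(hatw v r) = W at *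
          field_simp
  · have hq := Real.sqrt_pos.2 hr1
    have hRr := Real.sqrt_pos.2 hU
    refine (lint_cmul measurableSet_Ioo (g := fun s => uw v s / √(hatw (uw v) s))
      (c := √C2 / √(1 - r) ^ 3) (by positivity) ?_ (hat_half hup hui hr')).trans ?_
    · intro t ht
      have ht' : t ∈ Ico (0:ℝ) 1 := ⟨by linarith [hr.1, ht.1], ht.2⟩
      have ht1 : 0 < 1 - t := by linarith [ht.2]
      have htw := hat_pos hp hi ht'
      have htU := hat_pos hup hui ht'
      have htr : 1 - r ≤ 1 - t * r := by nlinarith [ht.2, hr.1]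
      have hqq := Real.sqrt_le_sqrt htr
      have a := Real.sqrt_le_sqrt (h2 t ht')
      rw [Real.sqrt_mul hC2.le, Real.sqrt_div' _ htw.le] at a
      have e : √((1-t)^3) = √(1-t)^3 := sqrt_cube ht1.le
      rw [e] at a
      have hqt := Real.sqrt_pos.2 ht1
      have hy := Real.sqrt_pos.2 htw
      have hR := Real.sqrt_pos.2 htU
      calc √(1-t) / √(hatw v t) * (1 / √(1 - t * r) ^ 3)
          ≤ √(1-t) / √(hatw v t) * (1 / √(1 - r) ^ 3) := by gcongr
        _ ≤ _ := by
          have e : uw v t = (√(1-t)^2)^2 / √(hatw v t)^2 := by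
            rw [Real.sq_sqrt ht1.le, Real.sq_sqrt htw.le]; rfl
          simp only [e]
          generalize √(hatw v t) = y at *
          generalize √(hatw (uw v) t) = R at *
          generalize √(1 - t) = p at *
          generalize √(1 - r) = q at *
          generalize √C2 = c at *
          rw [← mul_div_assoc, le_div_iff₀ hy] at a
          have : p / y * (1 / q^3) = (p / (y^2 * q^3 * R)) * (R * y) := by field_simp
          rw [this]
          have : c / q ^ 3 * ((p ^ 2) ^ 2 / y ^ 2 / R) = (p / (y^2 * q^3 * R)) * (c * p ^ 3) := by
            field_simp
          rw [this]
          gcongr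
    · apply ENNReal.ofReal_le_ofReal
      have a := Real.sqrt_le_sqrt (h2 r hr')
      rw [Real.sqrt_mul hC2.le, Real.sqrt_div' _ hw.le] at a
      have e : √((1-r)^3) = √(1-r)^3 := sqrt_cube hr1.le
      rw [e] at a
      calc _ ≤ √C2 / √(1 - r) ^ 3 * (2 * (√C2 * (√(1 - r) ^ 3 / √(hatw v r)))) := by gcongr
        _ = _ := by
          nth_rw 3 [← Real.sq_sqrt hC2.le]
          generalize √(hatw v r) = W at *
          generalize √(1 - r) = q at *
          generalize √C2 = c at *
          field_simp

lemma schurJ {v : ℝ → ℝ} (hv : RadialWeight v) {t : ℝ} (ht : t ∈ Ico (0:ℝ) 1) :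
      ∫⁻ r in Ioo 0 t, ENNReal.ofReal (v r / √(hatw v r) * (1 / √(1 - r) ^ 3)) ≤
        ENNReal.ofReal (2 * √(hatw v 0) + 3 * ∫ s in (0:ℝ)..t, √(hatw v s) / √(1 - s) ^ 5) := by
  have hp := hv.2.1
  have hi := hv.2.2
  have hmc : ∀ x ∈ Icc 0 t, 0 < √(1 - x) := fun x hx =>
    Real.sqrt_pos.2 (by linarith [hx.2, ht.2])
  have hmcont : ContinuousOn (fun s => √(hatw v s) / √(1 - s) ^ 5) (Icc 0 t) := by
    apply ContinuousOn.div
    · exact ((hat_cont hi).mono (Icc_subset_Icc_right ht.2.le)).sqrt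
    · fun_prop
    · intro x hx
      have := hmc x hx
      positivity
  have hmcont2 : ContinuousOn (fun s => 1 / √(1 - s) ^ 5) (Icc 0 t) := by
    apply ContinuousOn.div
    · fun_prop
    · fun_prop
    · intro x hx
      have := hmc x hx
      positivity
  have hmi : ∀ a ∈ Icc 0 t, ∀ b ∈ Icc 0 t,
      IntervalIntegrable (fun s => √(hatw v s) / √(1 - s) ^ 5) volume a b := fun a ha b hb =>
    (hmcont.mono (uIcc_subset_Icc ha hb)).intervalIntegrable
  have hmi2 : ∀ a ∈ Icc 0 t, ∀ b ∈ Icc 0 t,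
      IntervalIntegrable (fun s => 1 / √(1 - s) ^ 5) volume a b := fun a ha b hb =>
    (hmcont2.mono (uIcc_subset_Icc ha hb)).intervalIntegrable
  have hder : ∀ x ∈ Icc 0 t, HasDerivAt (fun s => (√(1 - s) ^ 3)⁻¹) (3 / 2 * (1 / √(1 - x) ^ 5)) x := by
    intro x hx
    have h := hmc x hx
    have h1 : (1 - x) ≠ 0 := by linarith [hx.2, ht.2]
    refine HasDerivAt.congr_deriv (((((hasDerivAt_id x).const_sub 1).sqrt h1).pow 3).inv
      (by simp only [id, Pi.pow_apply]; positivity)) ?_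
    simp only [id, Pi.pow_apply]
    generalize √(1 - x) = q at *
    field_simp
    norm_num
    ring
  have h0t : (0:ℝ) ∈ Icc 0 t := ⟨le_rfl, ht.1⟩
  have htt : t ∈ Icc 0 t := ⟨ht.1, le_rfl⟩
  have := mono_lint (f := fun x => 3 * (∫ s in (0:ℝ)..x, √(hatw v s) / √(1 - s) ^ 5) -
    2 * (√(hatw v x) * (√(1 - x) ^ 3)⁻¹)) (g := fun r => v r / √(hatw v r) * (1 / √(1 - r) ^ 3))
    ht.1 ?_ ?_
  · refine this.trans (ENNReal.ofReal_le_ofReal ?_)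
    have a1 : 0 ≤ √(hatw v t) * (√(1 - t) ^ 3)⁻¹ := by positivity
    simp
    linarith
  · intro a ha b hb hab
    have e := intervalIntegral.integral_add_adjacent_intervals (hmi 0 h0t a ha) (hmi a ha b hb)
    have i1 : √(hatw v b) * (∫ s in a..b, 1 / √(1 - s) ^ 5) ≤
        ∫ s in a..b, √(hatw v s) / √(1 - s) ^ 5 := by
      rw [← intervalIntegral.integral_const_mul]
      apply intervalIntegral.integral_mono_on hab ((hmi2 a ha b hb).const_mul _) (hmi a ha b hb)
      intro x hx
      have hx' : x ∈ Icc 0 t := ⟨ha.1.trans hx.1, hx.2.trans hb.2⟩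
      have hq := hmc x hx'
      have := Real.sqrt_le_sqrt (hat_anti hp hi ⟨hx'.1, hx'.2.trans ht.2.le⟩
        ⟨hb.1, hb.2.trans ht.2.le⟩ hx.2)
      rw [mul_one_div]
      gcongr
    have i2 : (∫ s in a..b, 3 / 2 * (1 / √(1 - s) ^ 5)) = (√(1 - b) ^ 3)⁻¹ - (√(1 - a) ^ 3)⁻¹ := by
      apply intervalIntegral.integral_eq_sub_of_hasDerivAt
      · intro x hx
        exact hder x (uIcc_subset_Icc ha hb hx)
      · exact (hmi2 a ha b hb).const_mul _
    rw [intervalIntegral.integral_const_mul] at i2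
    have i3 := Real.sqrt_le_sqrt (hat_anti hp hi ⟨ha.1, ha.2.trans ht.2.le⟩
        ⟨hb.1, hb.2.trans ht.2.le⟩ hab)
    have i4 : 0 ≤ (√(1 - a) ^ 3)⁻¹ := by positivity
    simp only
    rw [← e]
    have i5 := mul_le_mul_of_nonneg_right i3 i4
    have i6 : (∫ s in a..b, 1 / √(1 - s) ^ 5) = 2/3 * ((√(1 - b) ^ 3)⁻¹ - (√(1 - a) ^ 3)⁻¹) := by
      linarith
    rw [i6] at i1
    nlinarith
  · filter_upwards [hat_deriv hi] with x hx hxm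
    have hx' : x ∈ Ioo (0:ℝ) 1 := ⟨hxm.1, hxm.2.trans ht.2⟩
    have hpos := hat_pos hp hi (Ioo_subset_Ico_self hx')
    have hW := Real.sqrt_pos.2 hpos
    have hxc := Ioo_subset_Icc_self hxm
    have hq := hmc x hxc
    have d1 : HasDerivAt (fun x => ∫ s in (0:ℝ)..x, √(hatw v s) / √(1 - s) ^ 5)
        (√(hatw v x) / √(1 - x) ^ 5) x := by
      apply intervalIntegral.integral_hasDerivAt_right (hmi 0 h0t x hxc)
      · exact (hmcont.mono Ioo_subset_Icc_self).stronglyMeasurableAtFilter isOpen_Ioo x hxm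
      · exact hmcont.continuousAt (Icc_mem_nhds hxm.1 hxm.2)
    refine HasDerivAt.congr_deriv ((d1.const_mul 3).sub
      ((((hx hx').sqrt hpos.ne').mul (hder x hxc)).const_mul 2)) ?_
    generalize √(hatw v x) = W at *
    generalize √(1 - x) = q at *
    field_simp
    ring

lemma schur2 {v : ℝ → ℝ} (hv : RadialWeight v)
    (hvg2 : ∫⁻ s in Set.Ioo (0:ℝ) 1, ENNReal.ofReal ((1-s)^2 / hatw v s) < ⊤)
    (hM2 : M2v v < ⊤) :
    ∃ K : ℝ, 0 < K ∧ ∀ t ∈ Ioo (0:ℝ) 1,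
      ∫⁻ r in Ioo 0 1, ENNReal.ofReal (v r / √(hatw v r) * (1 / √(1 - t * r) ^ 3)) ≤
        ENNReal.ofReal (K * (√(hatw v t) / √(1 - t) ^ 3)) := by
  obtain ⟨C2, hC2, h2⟩ := fact2hi hv hvg2 hM2
  have hp := hv.2.1
  have hi := hv.2.2
  have hup := uw_pos hv
  have hui := uw_int hv hvg2
  have h00 : (0:ℝ) ∈ Ico (0:ℝ) 1 := by simp
  have hw0 := Real.sqrt_pos.2 (hat_pos hp hi h00)
  have hU0 := Real.sqrt_pos.2 (hat_pos hup hui h00)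
  have hc := Real.sqrt_pos.2 hC2
  -- (1-r)^3 in terms of sqrt
  have hcube : ∀ x ∈ Ico (0:ℝ) 1, √((1-x)^3) = √(1-x)^3 := by
    intro x hx
    have hx1 : 0 ≤ 1 - x := by linarith [hx.2]
    exact sqrt_cube hx1
  have hhi : ∀ x ∈ Ico (0:ℝ) 1, √(hatw (uw v) x) * √(hatw v x) ≤ √C2 * √(1-x)^3 := by
    intro x hx
    have hw := hat_pos hp hi hx
    have a := Real.sqrt_le_sqrt (h2 x hx)
    rw [Real.sqrt_mul hC2.le, Real.sqrt_div' _ hw.le, hcube x hx, ← mul_div_assoc,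
      le_div_iff₀ (Real.sqrt_pos.2 hw)] at a
    exact a
  have hlo : ∀ x ∈ Ico (0:ℝ) 1, √(1-x)^3 ≤ √8 * √(hatw (uw v) x) * √(hatw v x) := by
    intro x hx
    have hw := hat_pos hp hi hx
    have a := Real.sqrt_le_sqrt (fact2lo hv hvg2 hx)
    rw [Real.sqrt_mul (by norm_num), Real.sqrt_div' _ hw.le, hcube x hx, 
      div_le_iff₀ (Real.sqrt_pos.2 hw)] at a
    exact a
  refine ⟨(2 * √(hatw v 0) * (√8 * √(hatw (uw v) 0)) + 6 * √C2 ^ 3 * √8) + 2, by positivity,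
    fun t ht => ?_⟩
  have ht' := Ioo_subset_Ico_self ht
  have ht1 : 0 < 1 - t := by linarith [ht.2]
  have hW := Real.sqrt_pos.2 (hat_pos hp hi ht')
  have hR := Real.sqrt_pos.2 (hat_pos hup hui ht')
  have hq := Real.sqrt_pos.2 ht1
  refine (lint_split _ t).trans ?_
  rw [add_mul, ENNReal.ofReal_add (by positivity) (by positivity)]
  gcongr ?_ + ?_
  · have s1 : ∫⁻ r in Ioo 0 t, ENNReal.ofReal (v r / √(hatw v r) * (1 / √(1 - t * r) ^ 3)) ≤
       ∫⁻ r in Ioo 0 t, ENNReal.ofReal (v r / √(hatw v r) * (1 / √(1 - r) ^ 3)) := by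
      refine setLIntegral_mono' measurableSet_Ioo fun r hr => ENNReal.ofReal_le_ofReal ?_
      have hr' : r ∈ Ico (0:ℝ) 1 := ⟨hr.1.le, hr.2.trans ht.2⟩
      have := hp r hr'
      have := Real.sqrt_pos.2 (show 0 < 1 - r by linarith [hr'.2])
      have := Real.sqrt_le_sqrt (show 1 - r ≤ 1 - t * r by nlinarith [hr.1, ht.2])
      gcongr
    refine s1.trans ((schurJ hv ht').trans (ENNReal.ofReal_le_ofReal ?_))
    have s2 : ∫ s in (0:ℝ)..t, √(hatw v s) / √(1 - s) ^ 5 ≤ √C2 ^ 3 * (2 / √(hatw (uw v) t)) := by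
      have l1 : ∫⁻ s in Ioo 0 t, ENNReal.ofReal (√(hatw v s) / √(1 - s) ^ 5) ≤
          ENNReal.ofReal (√C2 ^ 3 * (2 / √(hatw (uw v) t))) := by
        refine lint_cmul measurableSet_Ioo (by positivity) ?_ (hat_threehalf hup hui ht')
        intro s hs
        have hs' : s ∈ Ico (0:ℝ) 1 := ⟨hs.1.le, hs.2.trans ht.2⟩
        have a := hhi s hs'
        have hs1 : 0 < 1 - s := by linarith [hs'.2]
        have hsw := hat_pos hp hi hs'
        have hsW := Real.sqrt_pos.2 hsw
        have hsR := Real.sqrt_pos.2 (hat_pos hup hui hs')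
        have hsq := Real.sqrt_pos.2 hs1
        have e : uw v s = (√(1-s)^2)^2 / √(hatw v s)^2 := by
          rw [Real.sq_sqrt hs1.le, Real.sq_sqrt hsw.le]; rfl
        rw [e]
        generalize √(hatw v s) = y at *
        generalize √(hatw (uw v) s) = R at *
        generalize √(1 - s) = p at *
        generalize √C2 = c at *
        have a3 := pow_le_pow_left₀ (by positivity) a 3
        have e1 : y / p ^ 5 = (R * y)^3 / (p^5 * y^2 * R^3) := by field_simp
        have e2 : c ^ 3 * ((p ^ 2) ^ 2 / y ^ 2 / R ^ 3) = (c * p^3)^3 / (p^5 * y^2 * R^3) := by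
          field_simp
        rw [e1, e2]
        gcongr
      rw [intervalIntegral.integral_of_le ht.1.le, integral_Ioc_eq_integral_Ioo]
      rw [integral_eq_lintegral_of_nonneg_ae]
      · exact ENNReal.toReal_le_of_le_ofReal (by positivity) l1
      · filter_upwards with x
        positivity
      · apply ContinuousOn.aestronglyMeasurable _ measurableSet_Ioo
        apply ContinuousOn.div
        · exact ((hat_cont hi).mono (fun x hx => ⟨hx.1.le, hx.2.le.trans ht.2.le⟩)).sqrt
        · fun_prop
        · intro x hx
          have := Real.sqrt_pos.2 (show 0 < 1 - x by linarith [hx.2, ht.2])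
          positivity
    have l0 := hlo t ht'
    have l3 : √(hatw (uw v) t) ≤ √(hatw (uw v) 0) := Real.sqrt_le_sqrt (hat_anti hup hui (by simp)
      (Ico_subset_Icc_self ht') ht.1.le)
    have l4 : 1 ≤ (√8 * √(hatw (uw v) 0)) * (√(hatw v t) / √(1 - t) ^ 3) := by
      rw [← mul_div_assoc, le_div_iff₀ (by positivity), one_mul]
      refine l0.trans ?_
      gcongr
    have l5 : 1 / √(hatw (uw v) t) ≤ √8 * (√(hatw v t) / √(1 - t) ^ 3) := by
      rw [← mul_div_assoc, div_le_div_iff₀ hR (by positivity)]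
      linarith
    calc _ ≤ 2 * √(hatw v 0) * 1 + 6 * √C2 ^ 3 * (1 / √(hatw (uw v) t)) := by
          have : √C2 ^ 3 * (2 / √(hatw (uw v) t)) = 2 * (√C2 ^ 3 * (1 / √(hatw (uw v) t))) := by ring
          linarith
      _ ≤ 2 * √(hatw v 0) * ((√8 * √(hatw (uw v) 0)) * (√(hatw v t) / √(1 - t) ^ 3)) +
          6 * √C2 ^ 3 * (√8 * (√(hatw v t) / √(1 - t) ^ 3)) := by gcongr
      _ = _ := by ring
  · refine (lint_cmul measurableSet_Ioo (c := 1 / √(1-t)^3) (by positivity) ?_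
      (hat_half hp hi ht')).trans (le_of_eq ?_)
    · intro r hr
      have hr' : r ∈ Ico (0:ℝ) 1 := ⟨ht.1.le.trans hr.1.le, hr.2⟩
      have := hp r hr'
      have := Real.sqrt_le_sqrt (show 1 - t ≤ 1 - t * r by nlinarith [hr.2, ht.1])
      rw [mul_comm]
      gcongr
    · congr 1; ring

lemma cs {α : Type*} [MeasurableSpace α] {μ : Measure α} {f a b : α → ENNReal}
    (ha : AEMeasurable a μ) (hb : AEMeasurable b μ) (h : ∀ᵐ x ∂μ, f x ^ 2 ≤ a x * b x) :
    (∫⁻ x, f x ∂μ) ^ 2 ≤ (∫⁻ x, a x ∂μ) * ∫⁻ x, b x ∂μ := by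
  have h1 : ∫⁻ x, f x ∂μ ≤ ∫⁻ x, a x ^ (1/2:ℝ) * b x ^ (1/2:ℝ) ∂μ := by
    apply lintegral_mono_ae
    filter_upwards [h] with x hx
    rw [← ENNReal.mul_rpow_of_nonneg _ _ (by norm_num)]
    calc f x = (f x ^ 2) ^ (1/2:ℝ) := by
          rw [← ENNReal.rpow_natCast, ← ENNReal.rpow_mul]; norm_num
      _ ≤ _ := ENNReal.rpow_le_rpow hx (by norm_num)
  have h2 := ENNReal.lintegral_mul_norm_pow_le ha hb (p := 1/2) (q := 1/2) (by norm_num) (by norm_num)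
    (by norm_num)
  have h3 := ENNReal.pow_le_pow_left (h1.trans h2) (n := 2)
  refine h3.trans (le_of_eq ?_)
  rw [mul_pow, ← ENNReal.rpow_natCast, ← ENNReal.rpow_natCast, ← ENNReal.rpow_mul,
    ← ENNReal.rpow_mul]
  norm_num

lemma nsq (ρ θ : ℝ) : ‖(1:ℂ) - ρ * (Complex.cos θ + Complex.sin θ * Complex.I)‖ ^ 2 =
    (1 - ρ) ^ 2 + 2 * ρ * (1 - Real.cos θ) := by
  rw [← Complex.normSq_eq_norm_sq, Complex.normSq_apply]
  rw [← Complex.ofReal_cos, ← Complex.ofReal_sin]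
  simp [-Complex.ofReal_cos, -Complex.ofReal_sin]
  linear_combination ρ^2 * Real.sin_sq_add_cos_sq θ

lemma angle {ρ : ℝ} (h0 : 0 ≤ ρ) (h1 : ρ < 1) :
    ∫⁻ θ in Ioo (-π) π, ENNReal.ofReal
      (1 / ‖(1:ℂ) - ρ * (Complex.cos θ + Complex.sin θ * Complex.I)‖ ^ 4) ≤
      ENNReal.ofReal (80 * π / (1 - ρ) ^ 3) := by
  have hd : 0 < 1 - ρ := by linarith
  generalize hδ : 1 - ρ = δ at hd
  have key : ∫⁻ θ in Ioo (-π) π, ENNReal.ofReal (1 / (δ ^ 2 + θ ^ 2)) ≤ ENNReal.ofReal (π / δ) := by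
    have := mono_lint (a := -π) (b := π) (f := fun x => Real.arctan (x / δ) * (1 / δ))
      (g := fun s => 1 / (δ ^ 2 + s ^ 2)) (by linarith [Real.pi_pos]) ?_ ?_
    · refine this.trans (ENNReal.ofReal_le_ofReal ?_)
      have a1 := Real.arctan_lt_pi_div_two (π / δ)
      have a2 := Real.neg_pi_div_two_lt_arctan (-π / δ)
      have : 0 < 1 / δ := by positivity
      have e : π / δ = π * (1 / δ) := div_eq_mul_one_div π δ
      rw [← sub_mul]
      generalize Real.arctan (π / δ) = A at *
      rw [e]
      gcongr
      linarith
    · intro a _ b _ hab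
      have : Real.arctan (a / δ) ≤ Real.arctan (b / δ) := Real.arctan_strictMono.monotone (by gcongr)
      simp only
      gcongr
    · refine Filter.Eventually.of_forall fun x _ => ?_
      refine HasDerivAt.congr_deriv ((((hasDerivAt_id x).div_const δ).arctan).mul_const (1/δ)) ?_
      simp only [id]
      field_simp
  refine (lint_cmul measurableSet_Ioo (c := 80 / δ ^ 2) (by positivity) ?_ key).trans (le_of_eq ?_)
  · intro θ hθ
    have hab : |θ| ≤ π := abs_le.2 ⟨hθ.1.le, hθ.2.le⟩
    have hc := Real.cos_le_one_sub_mul_cos_sq hab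
    have hn := nsq ρ θ
    have hpi : π ^ 2 ≤ 10 := by nlinarith [Real.pi_lt_d2, Real.pi_pos]
    have hth : θ ^ 2 ≤ 10 := by
      have := sq_le_sq' (by linarith [hθ.1] : -π ≤ θ) hθ.2.le
      linarith
    have hc2 : θ ^ 2 / 5 ≤ 1 - Real.cos θ := by
      have : (1/5:ℝ) ≤ 2 / π ^ 2 := by
        rw [div_le_div_iff₀ (by norm_num) (by positivity)]; linarith
      have := mul_le_mul_of_nonneg_right this (sq_nonneg θ)
      linarith
    have hcn : 0 ≤ 1 - Real.cos θ := by linarith [Real.cos_le_one θ]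
    rw [hδ] at hn
    generalize ‖(1:ℂ) - ρ * (Complex.cos θ + Complex.sin θ * Complex.I)‖ = n at *
    have l1 : δ ^ 2 ≤ n ^ 2 := by
      have : 0 ≤ 2 * ρ * (1 - Real.cos θ) := by positivity
      linarith
    have l2 : (δ ^ 2 + θ ^ 2) / 80 ≤ n ^ 2 := by
      rw [hn]
      rcases lt_or_ge ρ (1/2) with h | h
      · have : 0 ≤ 2 * ρ * (1 - Real.cos θ) := by positivity
        nlinarith
      · have : 1 * (1 - Real.cos θ) ≤ 2 * ρ * (1 - Real.cos θ) := by
          gcongr; linarith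
        nlinarith [sq_nonneg θ, sq_nonneg δ]
    have l3 : δ ^ 2 * ((δ ^ 2 + θ ^ 2) / 80) ≤ n ^ 4 := by
      calc _ ≤ n ^ 2 * n ^ 2 := by gcongr
        _ = _ := by ring
    calc 1 / n ^ 4 ≤ 1 / (δ ^ 2 * ((δ ^ 2 + θ ^ 2) / 80)) := by gcongr
      _ = _ := by field_simp
  · congr 1
    field_simp

lemma polar_le {g : ℝ → ENNReal} {t : ℝ} (ht : t ∈ Ioo (0:ℝ) 1) (hg : Measurable g) :
    ∫⁻ z in Metric.ball (0:ℂ) 1, g ‖z‖ * ENNReal.ofReal (1 / ‖1 - t * z‖ ^ 4) ≤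
      ∫⁻ r in Ioo (0:ℝ) 1, g r * ENNReal.ofReal (80 * π / (1 - t * r) ^ 3) := by
  rw [← lintegral_indicator Metric.isOpen_ball.measurableSet, ← Complex.lintegral_comp_polarCoord_symm,
    ← lintegral_indicator polarCoord.open_target.measurableSet]
  rw [← lintegral_indicator measurableSet_Ioo]
  have hF : Measurable (fun p : ℝ × ℝ => (g p.1 * ENNReal.ofReal
      (1 / ‖(1:ℂ) - ((t * p.1 : ℝ) : ℂ) * (Complex.cos p.2 + Complex.sin p.2 * Complex.I)‖ ^ 4))) := by
    fun_prop
  calc _ ≤ ∫⁻ p : ℝ × ℝ, (Ioo (0:ℝ) 1 ×ˢ Ioo (-π) π).indicator (fun p => g p.1 * ENNReal.ofReal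
      (1 / ‖(1:ℂ) - ((t * p.1 : ℝ) : ℂ) * (Complex.cos p.2 + Complex.sin p.2 * Complex.I)‖ ^ 4)) p := by
        apply lintegral_mono
        intro p
        simp only [indicator]
        split_ifs with h1 h2 h3 h4
        · have hp : 0 < p.1 ∧ p.2 ∈ Ioo (-π) π := by
            simpa [Complex.polarCoord_target, polarCoord_target] using h1
          have hn : ‖Complex.polarCoord.symm p‖ = p.1 := by
            rw [Complex.norm_polarCoord_symm, abs_of_pos hp.1]
          have hp1 : p.1 < 1 := by rw [← hn]; simpa using h2
          rw [hn, Complex.polarCoord_symm_apply]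
          rw [smul_eq_mul]
          have h5 : ENNReal.ofReal p.1 ≤ 1 := by simpa using ENNReal.ofReal_le_ofReal hp1.le
          refine (mul_le_mul_left h5 _).trans (le_of_eq ?_)
          rw [one_mul]
          push_cast
          simp only [mul_assoc]
        · exfalso
          have hp : 0 < p.1 ∧ p.2 ∈ Ioo (-π) π := by
            simpa [Complex.polarCoord_target, polarCoord_target] using h1
          have hn : ‖Complex.polarCoord.symm p‖ = p.1 := by
            rw [Complex.norm_polarCoord_symm, abs_of_pos hp.1]
          have hp1 : p.1 < 1 := by rw [← hn]; simpa using h2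
          exact h3 ⟨⟨hp.1, hp1⟩, hp.2⟩
        all_goals simp
    _ = ∫⁻ r in Ioo (0:ℝ) 1, ∫⁻ θ in Ioo (-π) π, g r * ENNReal.ofReal
      (1 / ‖(1:ℂ) - ((t * r : ℝ) : ℂ) * (Complex.cos θ + Complex.sin θ * Complex.I)‖ ^ 4) := by
        rw [lintegral_indicator (measurableSet_Ioo.prod measurableSet_Ioo), Measure.volume_eq_prod,
          setLIntegral_prod _ hF.aemeasurable]
    _ ≤ ∫⁻ r in Ioo (0:ℝ) 1, g r * ENNReal.ofReal (80 * π / (1 - t * r) ^ 3) := by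
        refine setLIntegral_mono' measurableSet_Ioo fun r hr => ?_
        rw [lintegral_const_mul _ (by fun_prop)]
        gcongr
        exact angle (mul_pos ht.1 hr.1).le (by nlinarith [ht.1, ht.2, hr.1, hr.2])
    _ = _ := by rw [lintegral_indicator measurableSet_Ioo]

lemma htil_deriv {φ : ℝ → ℂ} (hφ : Measurable φ) (hi : IntegrableOn (fun t => ‖φ t‖) (Ioo 0 1))
    {z : ℂ} (hz : z ∈ Metric.ball (0:ℂ) 1) :
    HasDerivAt (Htil φ) (∫ t in Ioo (0:ℝ) 1, (‖φ t‖ : ℂ) * (t / (1 - t * z) ^ 2)) z := by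
  have hz1 : ‖z‖ < 1 := by simpa using hz
  have hlow : ∀ t ∈ Ioo (0:ℝ) 1, ∀ ρ : ℝ, ∀ x : ℂ, ‖x‖ ≤ ρ → 1 - ρ ≤ ‖(1:ℂ) - t * x‖ := by
    intro t ht ρ x hx
    have := norm_sub_norm_le (1:ℂ) (t * x)
    rw [norm_one, norm_mul, Complex.norm_real, Real.norm_of_nonneg ht.1.le] at this
    have : t * ‖x‖ ≤ 1 * ‖x‖ := by gcongr; exact ht.2.le
    linarith
  set ρ := (1 + ‖z‖) / 2 with hρ
  have hρ1 : 0 < 1 - ρ := by rw [hρ]; linarith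
  have hbm : ∀ x ∈ Metric.ball z (1 - ρ), ‖x‖ ≤ ρ := by
    intro x hx
    have h1 : ‖x - z‖ < 1 - ρ := by simpa [dist_eq_norm] using hx
    have h2 := norm_sub_norm_le x z
    rw [hρ] at h1 ⊢
    linarith
  refine (hasDerivAt_integral_of_dominated_loc_of_deriv_le (μ := volume.restrict (Ioo (0:ℝ) 1))
    (F := fun z t => (‖φ t‖ : ℂ) / (1 - t * z))
    (F' := fun z t => (‖φ t‖ : ℂ) * (t / (1 - t * z) ^ 2))
    (bound := fun t => ‖φ t‖ * (1 / (1 - ρ) ^ 2))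
    (Metric.ball_mem_nhds z hρ1) ?_ ?_ ?_ ?_ ?_ ?_).2
  · refine Filter.Eventually.of_forall fun x => ?_
    exact Measurable.aestronglyMeasurable (by fun_prop)
  · refine Integrable.mono' (g := fun t => ‖φ t‖ * (1 / (1 - ρ))) (hi.mul_const _)
      (Measurable.aestronglyMeasurable (by fun_prop)) ?_
    filter_upwards [ae_restrict_mem measurableSet_Ioo] with t ht
    rw [norm_div, Complex.norm_real, norm_norm, div_eq_mul_one_div]
    have := hlow t ht ρ z (by rw [hρ]; linarith)
    gcongr
  · exact Measurable.aestronglyMeasurable (by fun_prop)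
  · filter_upwards [ae_restrict_mem measurableSet_Ioo] with t ht x hx
    rw [norm_mul, Complex.norm_real, norm_norm, norm_div, norm_pow, Complex.norm_real,
      Real.norm_of_nonneg ht.1.le]
    have := hlow t ht ρ x (hbm x hx)
    gcongr
    exact ht.2.le
  · exact hi.mul_const _
  · filter_upwards [ae_restrict_mem measurableSet_Ioo] with t ht x hx
    have h1 := hlow t ht ρ x (hbm x hx)
    have hne : (1:ℂ) - t * x ≠ 0 := by
      rw [← norm_pos_iff]; linarith
    have d1 : HasDerivAt (fun x : ℂ => (1:ℂ) - t * x) (-t) x := by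
      simpa using ((hasDerivAt_id x).const_mul (t:ℂ)).const_sub 1
    refine HasDerivAt.congr_deriv ((d1.inv hne).const_mul (‖φ t‖ : ℂ)) ?_
    ring

lemma hat_meas {v : ℝ → ℝ} (hv : RadialWeight v) :
    ∃ m : ℝ → ℝ, Measurable m ∧ ∀ r ∈ Ico (0:ℝ) 1, m r = hatw v r := by
  classical
  refine ⟨(Ico (0:ℝ) 1).piecewise (hatw v) (fun _ => 0), ?_, ?_⟩
  · apply ContinuousOn.measurable_piecewise
    · exact (hat_cont hv.2.2).mono Ico_subset_Icc_self
    · exact continuousOn_const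
    · exact measurableSet_Ico
  · intro r hr
    simp [hr]

lemma l1_bound {v : ℝ → ℝ} (hv : RadialWeight v)
    (hvg2 : ∫⁻ s in Set.Ioo (0:ℝ) 1, ENNReal.ofReal ((1-s)^2 / hatw v s) < ⊤)
    {φ : ℝ → ℂ} (hφ : Measurable φ) :
    (∫⁻ t in Ioo (0:ℝ) 1, ‖φ t‖ₑ) ^ 2 ≤ L2V2sq v φ * ENNReal.ofReal (hatw (uw v) 0) := by
  obtain ⟨m, hm, hme⟩ := hat_meas hv
  have e1 : L2V2sq v φ = ∫⁻ t in Ioo (0:ℝ) 1, ‖φ t‖ₑ ^ 2 * ENNReal.ofReal (m t / (1-t)^2) := by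
    unfold L2V2sq
    refine setLIntegral_congr_fun measurableSet_Ioo fun t ht => ?_
    rw [hme t (Ioo_subset_Ico_self ht)]; rfl
  have e2 : ENNReal.ofReal (hatw (uw v) 0) =
      ∫⁻ t in Ioo (0:ℝ) 1, ENNReal.ofReal ((1-t)^2 / m t) := by
    rw [← hat_lint (uw_pos hv) (uw_int hv hvg2) (by simp)]
    refine setLIntegral_congr_fun measurableSet_Ioo fun t ht => ?_
    simp only [uw]
    rw [hme t (Ioo_subset_Ico_self ht)]
  rw [e1, e2]
  apply cs (by fun_prop) (by fun_prop)
  filter_upwards [ae_restrict_mem measurableSet_Ioo] with t ht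
  have hpos := hat_pos hv.2.1 hv.2.2 (Ioo_subset_Ico_self ht)
  rw [← hme t (Ioo_subset_Ico_self ht)] at hpos
  have h1 : 0 < 1 - t := by linarith [ht.2]
  rw [mul_assoc, ← ENNReal.ofReal_mul (by positivity)]
  have : m t / (1-t)^2 * ((1-t)^2 / m t) = 1 := by field_simp
  rw [this]; simp

lemma main_bound {v : ℝ → ℝ} (hv : RadialWeight v) (hD : DoublingD v)
    (hvg2 : ∫⁻ s in Set.Ioo (0:ℝ) 1, ENNReal.ofReal ((1-s)^2 / hatw v s) < ⊤)
    (hM1 : M1v v < ⊤) (hM2 : M2v v < ⊤) :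
    ∃ K : ℝ, 0 < K ∧ ∀ φ : ℝ → ℂ, Measurable φ →
      ∫⁻ z in Metric.ball (0:ℂ) 1, (∫⁻ t in Ioo (0:ℝ) 1, ‖φ t‖ₑ *
        ENNReal.ofReal (1 / ‖1 - t * z‖ ^ 2)) ^ 2 * ENNReal.ofReal (v ‖z‖) ≤
      ENNReal.ofReal K * L2V2sq v φ := by
  obtain ⟨K1, hK1, h1⟩ := schur1 hv hD hvg2 hM1 hM2
  obtain ⟨K2, hK2, h2⟩ := schur2 hv hvg2 hM2
  obtain ⟨m, hm, hme⟩ := hat_meas hv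
  have hvm := hv.1
  have hmp : ∀ r ∈ Ico (0:ℝ) 1, 0 < m r := fun r hr => by
    rw [hme r hr]; exact hat_pos hv.2.1 hv.2.2 hr
  refine ⟨K1 * K2 * (80 * π), by positivity, fun φ hφ => ?_⟩
  let a : ℂ → ℝ → ENNReal := fun z t => ‖φ t‖ₑ ^ 2 *
    ENNReal.ofReal (√(m t) / √(1 - t) * √(1 - t * ‖z‖) ^ 3 * (1 / ‖1 - t * z‖ ^ 4))
  have hlow : ∀ z ∈ Metric.ball (0:ℂ) 1, ∀ t ∈ Ioo (0:ℝ) 1,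
      0 < 1 - t * ‖z‖ ∧ 0 < ‖(1:ℂ) - t * z‖ := by
    intro z hz t ht
    have hz1 : ‖z‖ < 1 := by simpa using hz
    have := norm_sub_norm_le (1:ℂ) (t * z)
    rw [norm_one, norm_mul, Complex.norm_real, Real.norm_of_nonneg ht.1.le] at this
    have : t * ‖z‖ ≤ 1 * ‖z‖ := by gcongr; exact ht.2.le
    constructor <;> linarith
  have step1 : ∀ z ∈ Metric.ball (0:ℂ) 1, (∫⁻ t in Ioo (0:ℝ) 1, ‖φ t‖ₑ *
        ENNReal.ofReal (1 / ‖1 - t * z‖ ^ 2)) ^ 2 ≤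
        (∫⁻ t in Ioo (0:ℝ) 1, a z t) * ENNReal.ofReal (K1 / √(m ‖z‖)) := by
    intro z hz
    have hz1 : ‖z‖ < 1 := by simpa using hz
    have hzm : ‖z‖ ∈ Ico (0:ℝ) 1 := ⟨norm_nonneg z, hz1⟩
    rw [hme _ hzm]
    refine le_trans (cs (a := a z) (b := fun t =>
      ENNReal.ofReal (√(1 - t) / √(m t) * (1 / √(1 - t * ‖z‖) ^ 3))) ?_ ?_ ?_) ?_
    · simp only [a]; fun_prop
    · fun_prop
    · filter_upwards [ae_restrict_mem measurableSet_Ioo] with t ht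
      obtain ⟨b1, b2⟩ := hlow z hz t ht
      have b3 := Real.sqrt_pos.2 b1
      have b4 := Real.sqrt_pos.2 (hmp t (Ioo_subset_Ico_self ht))
      have b5 := Real.sqrt_pos.2 (show 0 < 1 - t by linarith [ht.2])
      simp only [a]
      rw [mul_assoc, ← ENNReal.ofReal_mul (by positivity), mul_pow,
        ← ENNReal.ofReal_pow (by positivity)]
      apply le_of_eq
      congr 2
      generalize √(1 - t * ‖z‖) = A at *
      generalize √(1 - t) = B at *
      generalize √(m t) = D at *
      field_simp
    · gcongr
      refine le_trans (le_of_eq ?_) (h1 _ hzm)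
      refine setLIntegral_congr_fun measurableSet_Ioo fun t ht => ?_
      rw [hme t (Ioo_subset_Ico_self ht)]
  calc _ ≤ ∫⁻ z in Metric.ball (0:ℂ) 1, ∫⁻ t in Ioo (0:ℝ) 1,
        a z t * ENNReal.ofReal (K1 * (v ‖z‖ / √(m ‖z‖))) := by
        refine setLIntegral_mono' Metric.isOpen_ball.measurableSet fun z hz => ?_
        have hz1 : ‖z‖ < 1 := by simpa using hz
        have hzm : ‖z‖ ∈ Ico (0:ℝ) 1 := ⟨norm_nonneg z, hz1⟩
        rw [lintegral_mul_const' _ _ ENNReal.ofReal_ne_top]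
        calc _ ≤ ((∫⁻ t in Ioo (0:ℝ) 1, a z t) * ENNReal.ofReal (K1 / √(m ‖z‖))) *
              ENNReal.ofReal (v ‖z‖) := mul_le_mul_left (step1 z hz) _
          _ = _ := by
            rw [mul_assoc, ← ENNReal.ofReal_mul (by positivity)]
            congr 2; ring
    _ = ∫⁻ t in Ioo (0:ℝ) 1, ∫⁻ z in Metric.ball (0:ℂ) 1,
        a z t * ENNReal.ofReal (K1 * (v ‖z‖ / √(m ‖z‖))) := by
        apply lintegral_lintegral_swap
        apply Measurable.aemeasurable
        simp only [a, Function.uncurry_def]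
        fun_prop
    _ ≤ ∫⁻ t in Ioo (0:ℝ) 1, ENNReal.ofReal (K1 * K2 * (80 * π)) *
        (‖φ t‖ₑ ^ 2 * ENNReal.ofReal (hatw v t / (1-t)^2)) := by
        refine setLIntegral_mono' measurableSet_Ioo fun t ht => ?_
        have ht' := Ioo_subset_Ico_self ht
        have ht1 : 0 < 1 - t := by linarith [ht.2]
        have b4 := Real.sqrt_pos.2 (hmp t ht')
        have b5 := Real.sqrt_pos.2 ht1
        calc _ = ∫⁻ z in Metric.ball (0:ℂ) 1, (‖φ t‖ₑ ^ 2 * ENNReal.ofReal (K1 * (√(m t) / √(1 - t)))) *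
              (ENNReal.ofReal (v ‖z‖ / √(m ‖z‖) * √(1 - t * ‖z‖) ^ 3) *
                ENNReal.ofReal (1 / ‖1 - t * z‖ ^ 4)) := by
              refine setLIntegral_congr_fun Metric.isOpen_ball.measurableSet fun z hz => ?_
              simp only [a]
              obtain ⟨b1, b2⟩ := hlow z hz t ht
              have hz1 : ‖z‖ < 1 := by simpa using hz
              have hzm : ‖z‖ ∈ Ico (0:ℝ) 1 := ⟨norm_nonneg z, hz1⟩
              have := hv.2.1 _ hzm
              rw [mul_assoc (‖φ t‖ₑ ^ 2), mul_assoc (‖φ t‖ₑ ^ 2), ← ENNReal.ofReal_mul (by positivity),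
                ← ENNReal.ofReal_mul (by positivity), ← ENNReal.ofReal_mul (by positivity)]
              congr 2; ring
          _ = (‖φ t‖ₑ ^ 2 * ENNReal.ofReal (K1 * (√(m t) / √(1 - t)))) *
              ∫⁻ z in Metric.ball (0:ℂ) 1,
              (ENNReal.ofReal (v ‖z‖ / √(m ‖z‖) * √(1 - t * ‖z‖) ^ 3) *
                ENNReal.ofReal (1 / ‖1 - t * z‖ ^ 4)) := by
              rw [lintegral_const_mul _ (by fun_prop)]
          _ ≤ (‖φ t‖ₑ ^ 2 * ENNReal.ofReal (K1 * (√(m t) / √(1 - t)))) *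
              ∫⁻ r in Ioo (0:ℝ) 1, ENNReal.ofReal (v r / √(m r) * √(1 - t * r) ^ 3) *
                ENNReal.ofReal (80 * π / (1 - t * r) ^ 3) := by
              gcongr
              exact polar_le (g := fun r => ENNReal.ofReal (v r / √(m r) * √(1 - t * r) ^ 3)) ht
                (by fun_prop)
          _ ≤ (‖φ t‖ₑ ^ 2 * ENNReal.ofReal (K1 * (√(m t) / √(1 - t)))) *
              ENNReal.ofReal ((80 * π) * (K2 * (√(hatw v t) / √(1 - t) ^ 3))) := by
              gcongr
              rw [ENNReal.ofReal_mul (by positivity)]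
              refine le_trans ?_ (mul_le_mul_right (h2 t ht) _)
              rw [← lintegral_const_mul' _ _ ENNReal.ofReal_ne_top]
              refine setLIntegral_mono' measurableSet_Ioo fun r hr => ?_
              have hr' := Ioo_subset_Ico_self hr
              have b1 : 0 < 1 - t * r := by nlinarith [ht.1, ht.2, hr.1, hr.2]
              have b2 := Real.sqrt_pos.2 b1
              have b3 := hv.2.1 r hr'
              have b6 := Real.sqrt_pos.2 (hmp r hr')
              rw [← hme r hr', ← ENNReal.ofReal_mul (by positivity),
                ← ENNReal.ofReal_mul (by positivity)]
              apply le_of_eq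
              congr 1
              have hs := Real.sq_sqrt b1.le
              generalize √(1 - t * r) = A at *
              generalize √(m r) = D at *
              rw [← hs]
              field_simp
          _ = _ := by
              rw [mul_assoc, ← ENNReal.ofReal_mul (by positivity),
                mul_left_comm (ENNReal.ofReal (K1 * K2 * (80 * π))), ← ENNReal.ofReal_mul (by positivity)]
              congr 2
              rw [← hme t ht']
              have hs := Real.sq_sqrt ht1.le
              have hs2 := Real.sq_sqrt (hmp t ht').le
              generalize √(1 - t) = B at *
              generalize √(m t) = D at *
              rw [← hs, ← hs2]
              field_simp
    _ = _ := by
        rw [lintegral_const_mul' _ _ ENNReal.ofReal_ne_top]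
        rfl

lemma M1_ne {v : ℝ → ℝ} (hv : RadialWeight v) : M1v v ≠ 0 := by
  have ha := hat_anti hv.2.1 hv.2.2
  have w0 := hat_pos hv.2.1 hv.2.2 (r := 0) (by norm_num)
  have w3 := hat_pos hv.2.1 hv.2.2 (r := 3/4) (by norm_num)
  have h1 := lint_ge (S := Ioo (1/2) 1) (g := fun s => hatw v s / (1-s)^2) (a := 1/2) (b := 3/4)
    (c := hatw v (3/4)) w3.le (Ioo_subset_Ioo_right (by norm_num)) (by
      intro x hx
      have h1 : 0 < 1 - x := by linarith [hx.2]
      have h2 := ha (a := x) (b := 3/4) ⟨by linarith [hx.1], by linarith [hx.2]⟩ (by norm_num) hx.2.le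
      rw [le_div_iff₀ (by positivity)]
      have : (1 - x)^2 ≤ 1 := by nlinarith [hx.1]
      nlinarith)
  have h2 := lint_ge (S := Ioo 0 (1/2)) (g := fun s => 1 / hatw v s) (a := 0) (b := 1/2)
    (c := 1 / hatw v 0) (by positivity) subset_rfl (by
      intro x hx
      have h2 := ha (a := 0) (b := x) (by norm_num) ⟨by linarith [hx.1], by linarith [hx.2]⟩ hx.1.le
      have h3 := hat_pos hv.2.1 hv.2.2 (r := x) ⟨by linarith [hx.1], by linarith [hx.2]⟩
      gcongr)
  have p1 := (ENNReal.ofReal_pos.2 (by positivity : 0 < hatw v (3/4) * (3/4 - 1/2))).trans_le h1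
  have p2 := (ENNReal.ofReal_pos.2 (by positivity : 0 < 1 / hatw v 0 * (1/2 - 0))).trans_le h2
  have h := le_iSup₂ (f := fun (r:ℝ) (_ : r ∈ Ioo (0:ℝ) 1) =>
    (∫⁻ s in Set.Ioo r 1, ENNReal.ofReal (hatw v s / (1-s)^2)) ^ (1/2 : ℝ) *
    (∫⁻ s in Set.Ioo (0:ℝ) r, ENNReal.ofReal (1 / hatw v s)) ^ (1/2 : ℝ)) (1/2) (by norm_num)
  intro h0
  have h' := h.trans h0.le
  simp only [nonpos_iff_eq_zero, mul_eq_zero, ENNReal.rpow_eq_zero_iff] at h'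
  norm_num at h'
  rcases h' with h' | h'
  · exact p1.ne' (by simpa using h')
  · exact p2.ne' (by simpa using h')

lemma M2_ne {v : ℝ → ℝ} (hv : RadialWeight v) : M2v v ≠ 0 := by
  have ha := hat_anti hv.2.1 hv.2.2
  have w0 := hat_pos hv.2.1 hv.2.2 (r := 0) (by norm_num)
  have w3 := hat_pos hv.2.1 hv.2.2 (r := 1/2) (by norm_num)
  have h1 := lint_ge (S := Ioo 0 (1/2)) (g := fun s => hatw v s / (1-s)^4) (a := 0) (b := 1/2)
    (c := hatw v (1/2)) w3.le subset_rfl (by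
      intro x hx
      have h1 : 0 < 1 - x := by linarith [hx.2]
      have h2 := ha (a := x) (b := 1/2) ⟨by linarith [hx.1], by linarith [hx.2]⟩ (by norm_num) hx.2.le
      rw [le_div_iff₀ (by positivity)]
      have : (1 - x)^4 ≤ 1 := pow_le_one₀ h1.le (by linarith [hx.1])
      nlinarith)
  have h2 := lint_ge (S := Ioo (1/2) 1) (g := fun s => (1-s)^2 / hatw v s) (a := 1/2) (b := 3/4)
    (c := (1/4)^2 / hatw v 0) (by positivity) (Ioo_subset_Ioo_right (by norm_num)) (by
      intro x hx
      have h2 := ha (a := 0) (b := x) (by norm_num) ⟨by linarith [hx.1], by linarith [hx.2]⟩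
        (by linarith [hx.1])
      have h3 := hat_pos hv.2.1 hv.2.2 (r := x) ⟨by linarith [hx.1], by linarith [hx.2]⟩
      have h4 : 1/4 ≤ 1 - x := by linarith [hx.2]
      gcongr)
  have p1 := (ENNReal.ofReal_pos.2 (by positivity : 0 < hatw v (1/2) * (1/2 - 0))).trans_le h1
  have p2 := (ENNReal.ofReal_pos.2 (by positivity : 0 < (1/4)^2 / hatw v 0 * (3/4 - 1/2))).trans_le h2
  have h := le_iSup₂ (f := fun (r:ℝ) (_ : r ∈ Ioo (0:ℝ) 1) =>
    (∫⁻ s in Set.Ioo (0:ℝ) r, ENNReal.ofReal (hatw v s / (1-s)^4)) ^ (1/2 : ℝ) *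
    (∫⁻ s in Set.Ioo r 1, ENNReal.ofReal ((1-s)^2 / hatw v s)) ^ (1/2 : ℝ)) (1/2) (by norm_num)
  intro h0
  have h' := h.trans h0.le
  simp only [nonpos_iff_eq_zero, mul_eq_zero, ENNReal.rpow_eq_zero_iff] at h'
  norm_num at h'
  rcases h' with h' | h'
  · exact p1.ne' (by simpa using h')
  · exact p2.ne' (by simpa using h')

lemma final {v : ℝ → ℝ} (hv : RadialWeight v) (hD : DoublingD v)
    (hvg2 : ∫⁻ s in Set.Ioo (0:ℝ) 1, ENNReal.ofReal ((1-s)^2 / hatw v s) < ⊤)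
    (hM1 : M1v v < ⊤) (hM2 : M2v v < ⊤) :
    ∃ K : ℝ, 0 < K ∧ ∀ φ : ℝ → ℂ, Measurable φ → L2V2sq v φ < ⊤ →
      DifferentiableOn ℂ (Htil φ) (Metric.ball 0 1) ∧
      DvSq v (Htil φ) ≤ ENNReal.ofReal K * L2V2sq v φ := by
  obtain ⟨K, hK, hb⟩ := main_bound hv hD hvg2 hM1 hM2
  have hR := hat_pos (uw_pos hv) (uw_int hv hvg2) (r := 0) (by simp)
  refine ⟨hatw (uw v) 0 + π⁻¹ * K, by positivity, fun φ hφ hL => ?_⟩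
  have h1 := l1_bound hv hvg2 hφ
  have hfin : ∫⁻ t in Ioo (0:ℝ) 1, ‖φ t‖ₑ < ⊤ := by
    have : (∫⁻ t in Ioo (0:ℝ) 1, ‖φ t‖ₑ) ^ 2 < ⊤ :=
      h1.trans_lt (ENNReal.mul_lt_top hL ENNReal.ofReal_lt_top)
    by_contra h
    rw [not_lt, top_le_iff] at h
    rw [h] at this
    simp at this
  have hi : IntegrableOn (fun t => ‖φ t‖) (Ioo 0 1) :=
    Integrable.norm ⟨hφ.aestronglyMeasurable, hfin⟩
  refine ⟨fun z hz => (htil_deriv hφ hi hz).differentiableAt.differentiableWithinAt, ?_⟩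
  have p0 : (‖Htil φ 0‖₊ : ENNReal) ≤ ∫⁻ t in Ioo (0:ℝ) 1, ‖φ t‖ₑ := by
    refine (enorm_integral_le_lintegral_enorm _).trans (le_of_eq ?_)
    refine lintegral_congr fun t => ?_
    rw [mul_zero, sub_zero, div_one, ← ofReal_norm, Complex.norm_real, norm_norm, ofReal_norm]
  have p1 : ∀ z ∈ Metric.ball (0:ℂ) 1, (‖deriv (Htil φ) z‖₊ : ENNReal) ≤
      ∫⁻ t in Ioo (0:ℝ) 1, ‖φ t‖ₑ * ENNReal.ofReal (1 / ‖1 - t * z‖ ^ 2) := by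
    intro z hz
    rw [(htil_deriv hφ hi hz).deriv]
    refine (enorm_integral_le_lintegral_enorm _).trans ?_
    refine setLIntegral_mono' measurableSet_Ioo fun t ht => ?_
    rw [enorm_mul]
    have e : ‖((‖φ t‖ : ℝ) : ℂ)‖ₑ = ‖φ t‖ₑ := by
      rw [← ofReal_norm, Complex.norm_real, norm_norm, ofReal_norm]
    rw [e]
    gcongr
    rw [← ofReal_norm]
    apply ENNReal.ofReal_le_ofReal
    rw [norm_div, norm_pow, Complex.norm_real, Real.norm_of_nonneg ht.1.le]
    gcongr
    exact ht.2.le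
  unfold DvSq
  rw [ENNReal.ofReal_add hR.le (by positivity), add_mul, ENNReal.ofReal_mul (by positivity),
    ENNReal.ofReal_inv_of_pos Real.pi_pos, mul_assoc]
  refine add_le_add ?_ ?_
  · rw [mul_comm (ENNReal.ofReal _)]
    exact (ENNReal.pow_le_pow_left p0).trans h1
  · refine mul_le_mul_right (le_trans ?_ (hb φ hφ)) _
    refine setLIntegral_mono' Metric.isOpen_ball.measurableSet fun z hz => ?_
    gcongr
    exact p1 z hz

end HT

/-- (iii)⇒(ii) of Theorem 1.2 with the norm estimate: if `v ∈ D̂` satisfies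
`∫_0^1 (1-s)²/v̂(s) ds < ∞`, `M₁(v) < ∞` and `M₂(v) < ∞`, then the sublinear Hilbert operator
`H̃ : L²_{V̂₂} → D_v` is bounded with norm `≲ M₁(v)M₂(v)`. -/
theorem statement4 (v : ℝ → ℝ) (hv : RadialWeight v) (hD : DoublingD v)
    (hvg2 : ∫⁻ s in Set.Ioo (0:ℝ) 1, ENNReal.ofReal ((1-s)^2 / hatw v s) < ⊤)
    (hM1 : M1v v < ⊤) (hM2 : M2v v < ⊤) :
    ∃ C : ℝ, 0 < C ∧ ∀ φ : ℝ → ℂ, Measurable φ → L2V2sq v φ < ⊤ →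
      DifferentiableOn ℂ (Htil φ) (Metric.ball 0 1) ∧
      (DvSq v (Htil φ)) ^ (1/2 : ℝ) ≤
        ENNReal.ofReal C * M1v v * M2v v * (L2V2sq v φ) ^ (1/2 : ℝ) := by
  obtain ⟨K, hK, h⟩ := HT.final hv hD hvg2 hM1 hM2
  have n1 := ENNReal.toReal_pos (HT.M1_ne hv) hM1.ne
  have n2 := ENNReal.toReal_pos (HT.M2_ne hv) hM2.ne
  refine ⟨√K / ((M1v v).toReal * (M2v v).toReal), by positivity, fun φ hφ hL => ?_⟩
  obtain ⟨hd, hle⟩ := h φ hφ hL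
  refine ⟨hd, ?_⟩
  have e : ENNReal.ofReal (√K / ((M1v v).toReal * (M2v v).toReal)) * M1v v * M2v v =
      ENNReal.ofReal K ^ (1/2 : ℝ) := by
    conv_lhs => rw [← ENNReal.ofReal_toReal hM1.ne, ← ENNReal.ofReal_toReal hM2.ne]
    rw [ENNReal.toReal_ofReal n1.le, ENNReal.toReal_ofReal n2.le,
      ← ENNReal.ofReal_mul (by positivity), ← ENNReal.ofReal_mul (by positivity),
      ENNReal.ofReal_rpow_of_pos hK, ← Real.sqrt_eq_rpow]
    congr 1
    field_simp
  rw [e, ← ENNReal.mul_rpow_of_nonneg _ _ (by norm_num)]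
  exact ENNReal.rpow_le_rpow hle (by norm_num)

end
end
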